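/- arXiv:1309.6506 — 4 statements merged into one kernel-verified Lean document; each statement's English description precedes it below -/
import Mathlib

section
/- For all fixed integers r ≥ 2, q ≥ −r+1 and k ≥ r+q+1, one has ex(n, H^{(r)}(k,q)) = Ω(n^{r−1+(q+r)/(k−1)}); precisely, there exist a real constant c > 0 and an integer n₀ such that for every integer n ≥ n₀ there exists an H^{(r)}(k,q)-free r-uniform hypergraph on n vertices with at least c·n^{r−1+(q+r)/(k−1)} edges. -/
/-!
Deletion method. Take every `r`-set as an edge independently with probability
`p = c * n ^ (t - 1)`, where `t = (q + r) / (k - 1)`, and remove one edge from each forbidden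
configuration. There are `O(n ^ (i - q - 1))` forbidden configurations with `i` edges, so about
`n ^ (i - q - 1) * p ^ i = c ^ i * n ^ (i * t - q - 1)` of them survive on average. As `i ≤ k`
gives `(i - 1) * t ≤ q + r`, this is at most `c ^ 2 * n ^ (r - 1 + t)`, whereas the expected number
of edges has order `c * n ^ (r - 1 + t)`. For small `c` the deletions cost only a fraction of the
edges.
-/

/-- An edge set `E` (of an `r`-uniform hypergraph) is `H^{(r)}(k,q)`-free if for every
integer `i` with `q + r + 1 ≤ i ≤ k`, every `i` pairwise distinct edges together cover
at least `i - q` vertices. -/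
def HFree {V : Type*} [DecidableEq V] (r k : ℕ) (q : ℤ) (E : Finset (Finset V)) : Prop :=
  ∀ i : ℕ, q + r + 1 ≤ (i : ℤ) → i ≤ k → ∀ E' ⊆ E, E'.card = i →
    (i : ℤ) - q ≤ ((E'.biUnion id).card : ℤ)

section Deletion

open Finset

variable {α R : Type*} [CommRing R]

lemma sum_powerset_ite_card_eq_one_mul_pow (X : Finset α) (x : R) :
    ∑ T ∈ X.powerset, (if #T = 1 then 1 else 0) * x ^ #T = #X * x := by
  simp only [ite_mul, one_mul, zero_mul]
  rw [← sum_filter, ← powersetCard_eq_filter, powersetCard_one]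
  simp

variable [LinearOrder R] [IsStrictOrderedRing R] {p : R}

/- The left-hand side is the expectation of the right-hand side over a `p`-random subset `S` of `X`.
Deciding the elements of `X` one at a time, one of the two choices never decreases it. -/
lemma exists_subset_sum_mul_pow_card_le (hp₀ : 0 ≤ p) (hp₁ : p ≤ 1) (X : Finset α)
    (c : Finset α → R) :
    ∃ S ⊆ X, ∑ T ∈ X.powerset, c T * p ^ #T ≤ ∑ T ∈ S.powerset, c T := by
  classical
  induction X using Finset.induction_on generalizing c with
  | empty => exact ⟨∅, Subset.rfl, by simp⟩
  | insert a X ha ih =>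
    set u := ∑ T ∈ X.powerset, c T * p ^ #T
    set v := ∑ T ∈ X.powerset, (c T + c (insert a T)) * p ^ #T with hv
    have average : ∑ T ∈ (insert a X).powerset, c T * p ^ #T = (1 - p) * u + p * v := by
      have insert_term : ∀ T ∈ X.powerset,
          c (insert a T) * p ^ #(insert a T) = p * (c (insert a T) * p ^ #T) := fun T hT => by
        rw [card_insert_of_notMem fun h => ha (mem_powerset.1 hT h)]
        ring
      rw [sum_powerset_insert ha, sum_congr rfl insert_term, ← mul_sum, hv]
      simp only [add_mul, sum_add_distrib]
      ring
    rw [average]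
    rcases le_total v u with hvu | huv
    · obtain ⟨S, hSX, hS⟩ := ih c
      exact ⟨S, hSX.trans (subset_insert a X), by nlinarith⟩
    · obtain ⟨S, hSX, hS⟩ := ih fun T => c T + c (insert a T)
      refine ⟨insert a S, insert_subset_insert a hSX, ?_⟩
      rw [sum_powerset_insert fun h => ha (hSX h), ← sum_add_distrib]
      nlinarith

lemma exists_subset_mul_card_sub_sum_pow_card_le [DecidableEq α] (hp₀ : 0 ≤ p) (hp₁ : p ≤ 1)
    (X : Finset α) (B : Finset (Finset α)) :
    ∃ S ⊆ X, p * #X - ∑ T ∈ B, p ^ #T ≤ (#S : R) - #{T ∈ B | T ⊆ S} := by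
  obtain ⟨S, hSX, hS⟩ := exists_subset_sum_mul_pow_card_le hp₀ hp₁ X
    fun T => (if #T = 1 then 1 else 0) - if T ∈ B then 1 else 0
  refine ⟨S, hSX, ?_⟩
  have expected_bad_le :
      ∑ T ∈ X.powerset, (if T ∈ B then 1 else 0) * p ^ #T ≤ ∑ T ∈ B, p ^ #T := by
    simp only [ite_mul, one_mul, zero_mul]
    rw [← sum_filter]
    exact sum_le_sum_of_subset_of_nonneg (fun T hT => (mem_filter.1 hT).2)
      fun _ _ _ => by positivity
  have card_eq_sum : ∑ T ∈ S.powerset, (if #T = 1 then 1 else 0) = (#S : R) := by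
    simpa using sum_powerset_ite_card_eq_one_mul_pow S (1 : R)
  have card_bad_eq_sum :
      ∑ T ∈ S.powerset, (if T ∈ B then 1 else 0) = (#{T ∈ B | T ⊆ S} : R) := by
    rw [sum_boole]
    congr 2
    ext T
    simp only [mem_filter, mem_powerset, and_comm]
  simp only [sub_mul, sum_sub_distrib, sum_powerset_ite_card_eq_one_mul_pow, card_eq_sum,
    card_bad_eq_sum] at hS
  linarith

lemma exists_subset_card_le_add_forall_not_subset (S : Finset α) {B : Finset (Finset α)}
    (hB : ∀ T ∈ B, T.Nonempty) : ∃ E ⊆ S, #S ≤ #E + #B ∧ ∀ T ∈ B, ¬T ⊆ E := by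
  classical
  choose a ha using hB
  set A := B.attach.image fun T : B => a T T.2
  refine ⟨S \ A, sdiff_subset, ?_, fun T hT hTE => ?_⟩
  · have hA : #A ≤ #B := card_image_le.trans_eq card_attach
    have := le_card_sdiff A S
    omega
  · exact (mem_sdiff.1 (hTE (ha T hT))).2
      (mem_image.2 ⟨⟨T, hT⟩, mem_attach B _, rfl⟩)

lemma exists_subset_le_card_forall_not_subset (hp₀ : 0 ≤ p) (hp₁ : p ≤ 1) (X : Finset α)
    {B : Finset (Finset α)} (hB : ∀ T ∈ B, T.Nonempty) :
    ∃ E ⊆ X, p * #X - ∑ T ∈ B, p ^ #T ≤ #E ∧ ∀ T ∈ B, ¬T ⊆ E := by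
  classical
  obtain ⟨S, hSX, hS⟩ := exists_subset_mul_card_sub_sum_pow_card_le hp₀ hp₁ X B
  obtain ⟨E, hES, hcard, hE⟩ := exists_subset_card_le_add_forall_not_subset S
    (B := {T ∈ B | T ⊆ S}) fun T hT => hB T (mem_filter.1 hT).1
  refine ⟨E, hES.trans hSX, ?_,
    fun T hT hTE => hE T (mem_filter.2 ⟨hT, hTE.trans hES⟩) hTE⟩
  have : (#S : R) ≤ #E + #{T ∈ B | T ⊆ S} := mod_cast hcard
  linarith

end Deletion

section Counting

open Finset

variable {V : Type*} [DecidableEq V]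

lemma exists_subset_image_univ_of_card_le [Nonempty V] {W : Finset V} {m : ℕ} (hW : #W ≤ m) :
    ∃ f : Fin m → V, W ⊆ univ.image f := by
  obtain ⟨φ⟩ : Nonempty (W ↪ Fin m) := Function.Embedding.nonempty_of_card_le (by simpa using hW)
  refine ⟨Function.extend φ Subtype.val fun _ => Classical.arbitrary V, fun v hv => ?_⟩
  exact mem_image.2 ⟨φ ⟨v, hv⟩, mem_univ _, φ.injective.extend_apply _ _ _⟩

lemma card_filter_card_biUnion_id_le [Fintype V] [Nonempty V] (m : ℕ) :
    #{F : Finset (Finset V) | #(F.biUnion id) ≤ m} ≤ Fintype.card V ^ m * 2 ^ 2 ^ m := by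
  have covered : ({F : Finset (Finset V) | #(F.biUnion id) ≤ m} : Finset _) ⊆
      (univ : Finset (Fin m → V)).biUnion fun f => (univ.image f).powerset.powerset := by
    intro F hF
    obtain ⟨f, hf⟩ := exists_subset_image_univ_of_card_le (mem_filter.1 hF).2
    refine mem_biUnion.2 ⟨f, mem_univ f, mem_powerset.2 fun e he => mem_powerset.2 ?_⟩
    exact (subset_biUnion_of_mem id he).trans hf
  have card_powerset_powerset_le (f : Fin m → V) :
      #(univ.image f).powerset.powerset ≤ 2 ^ 2 ^ m := by
    rw [card_powerset, card_powerset]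
    have : #(univ.image f) ≤ m := card_image_le.trans_eq (card_fin m)
    gcongr <;> norm_num
  calc
    _ ≤ _ := card_le_card covered
    _ ≤ #(univ : Finset (Fin m → V)) * 2 ^ 2 ^ m :=
      card_biUnion_le_card_mul _ _ _ fun f _ => card_powerset_powerset_le f
    _ = _ := by simp

end Counting

section Crowded

open Finset

variable {V : Type*} [DecidableEq V] [Fintype V]

variable (V) in
/-- The configurations forbidden in an `H^{(r)}(k,q)`-free edge set: families of at least
`q + r + 1` and at most `k` sets covering fewer vertices than their number minus `q`. The sets
themselves may have any size. -/
def crowded (r k : ℕ) (q : ℤ) : Finset (Finset (Finset V)) :=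
  {F | q + r + 1 ≤ (#F : ℤ) ∧ #F ≤ k ∧ (#(F.biUnion id) : ℤ) < #F - q}

variable {r k : ℕ} {q : ℤ}

lemma hFree_iff_forall_crowded_not_subset {E : Finset (Finset V)} :
    HFree r k q E ↔ ∀ F ∈ crowded V r k q, ¬F ⊆ E := by
  simp only [crowded, mem_filter, mem_univ, true_and]
  constructor
  · rintro hE F ⟨hF₁, hF₂, hF₃⟩ hFE
    exact hF₃.not_ge (hE #F hF₁ hF₂ F hFE rfl)
  · rintro hE _ hi₁ hi₂ F hFE rfl
    exact not_lt.1 fun hF => hE F ⟨hi₁, hi₂, hF⟩ hFE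

lemma card_crowded_filter_card_eq_le [Nonempty V] {i : ℕ} (hi₁ : q + r + 1 ≤ (i : ℤ))
    (hi₂ : i ≤ k) :
    (#{F ∈ crowded V r k q | #F = i} : ℝ) ≤
      2 ^ 2 ^ (k - q - 1).toNat * (Fintype.card V : ℝ) ^ ((i : ℝ) - q - 1) := by
  obtain ⟨m, hm⟩ : ∃ m : ℕ, (m : ℤ) = i - q - 1 := ⟨(i - q - 1).toNat, by omega⟩
  have hm_real : (i : ℝ) - q - 1 = (m : ℝ) := mod_cast hm.symm
  have subset_covering_le : {F ∈ crowded V r k q | #F = i} ⊆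
      ({F | #(F.biUnion id) ≤ m} : Finset (Finset (Finset V))) := fun F hF => by
    simp only [crowded, mem_filter, mem_univ, true_and] at hF ⊢
    omega
  have card_le : #{F ∈ crowded V r k q | #F = i} ≤
      2 ^ 2 ^ (k - q - 1).toNat * Fintype.card V ^ m := calc
    _ ≤ Fintype.card V ^ m * 2 ^ 2 ^ m :=
      (card_le_card subset_covering_le).trans (card_filter_card_biUnion_id_le m)
    _ ≤ _ := by
      rw [mul_comm]
      gcongr
      · norm_num
      · norm_num
      · omega
  rw [hm_real, Real.rpow_natCast]
  exact_mod_cast card_le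

lemma sum_crowded_pow_card_le [Nonempty V] {p M : ℝ} (hqr : 0 ≤ q + r) (hp : 0 ≤ p) (hM₀ : 0 ≤ M)
    (hM : ∀ i : ℕ, q + r + 1 ≤ (i : ℤ) → i ≤ k →
      (Fintype.card V : ℝ) ^ ((i : ℝ) - q - 1) * p ^ i ≤ M) :
    ∑ F ∈ crowded V r k q, p ^ #F ≤ k * 2 ^ 2 ^ (k - q - 1).toNat * M := by
  have card_mem : ∀ F ∈ crowded V r k q, #F ∈ Icc (q + r + 1).toNat k := fun F hF => by
    simp only [crowded, mem_filter, mem_univ, true_and, mem_Icc] at hF ⊢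
    omega
  have fiber_le : ∀ i ∈ Icc (q + r + 1).toNat k,
      ∑ F ∈ crowded V r k q with #F = i, p ^ #F ≤ 2 ^ 2 ^ (k - q - 1).toNat * M := by
    intro i hi
    obtain ⟨hi₁, hi₂⟩ : q + r + 1 ≤ (i : ℤ) ∧ i ≤ k := by
      rw [mem_Icc] at hi
      omega
    calc
      _ = #{F ∈ crowded V r k q | #F = i} * p ^ i := by
        rw [← nsmul_eq_mul, ← sum_const]
        exact sum_congr rfl fun F hF => by rw [(mem_filter.1 hF).2]
      _ ≤ 2 ^ 2 ^ (k - q - 1).toNat * (Fintype.card V : ℝ) ^ ((i : ℝ) - q - 1) * p ^ i := by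
        gcongr
        exact card_crowded_filter_card_eq_le hi₁ hi₂
      _ ≤ _ := by
        rw [mul_assoc]
        gcongr
        exact hM i hi₁ hi₂
  have card_sizes_le : #(Icc (q + r + 1).toNat k) ≤ k := by
    rw [Nat.card_Icc]
    omega
  calc
    _ = _ := (sum_fiberwise_of_maps_to card_mem _).symm
    _ ≤ _ := sum_le_card_nsmul _ _ _ fiber_le
    _ ≤ _ := by
      rw [nsmul_eq_mul, mul_assoc]
      gcongr

end Crowded

section Parameters

lemma pow_div_le_choose {K : Type*} [Field K] [LinearOrder K] [IsStrictOrderedRing K] {r n : ℕ}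
    (h : 2 * r ≤ n) : (n : K) ^ r / (2 ^ r * r.factorial) ≤ n.choose r := by
  refine le_trans ?_ (Nat.pow_le_choose r n)
  have : (n : K) ≤ (n + 1 - r : ℕ) * 2 := mod_cast (by omega : n ≤ (n + 1 - r) * 2)
  rw [← div_div, ← div_pow]
  gcongr
  linarith

lemma mul_rpow_le_mul_rpow_sub_one_mul_choose {r n : ℕ} {c : ℝ} (hn₀ : n ≠ 0) (hn : 2 * r ≤ n)
    (hc : 0 ≤ c) (t : ℝ) :
    c / (2 ^ r * r.factorial) * (n : ℝ) ^ (r - 1 + t) ≤ c * n ^ (t - 1) * n.choose r := by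
  calc
    _ = c * n ^ (t - 1) * ((n : ℝ) ^ r / (2 ^ r * r.factorial)) := by
      have : (n : ℝ) ^ (r - 1 + t) = n ^ (t - 1) * n ^ r := by
        rw [← Real.rpow_add_natCast (mod_cast hn₀)]
        ring_nf
      rw [this]
      ring
    _ ≤ _ := by
      gcongr
      exact pow_div_le_choose hn

lemma rpow_mul_mul_rpow_sub_one_pow_le {n c t r q : ℝ} {i : ℕ} (hn : 1 ≤ n) (hc₀ : 0 ≤ c)
    (hc₁ : c ≤ 1) (hi : 2 ≤ i) (ht : (i - 1) * t ≤ q + r) :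
    n ^ (i - q - 1) * (c * n ^ (t - 1)) ^ i ≤ c ^ 2 * n ^ (r - 1 + t) := by
  have hn₀ : 0 < n := by linarith
  calc
    _ = c ^ i * n ^ (i * t - q - 1) := by
      rw [mul_pow, mul_left_comm, ← Real.rpow_mul_natCast hn₀.le, ← Real.rpow_add hn₀]
      ring_nf
    _ ≤ _ := by
      gcongr ?_ * ?_
      · exact pow_le_pow_of_le_one hc₀ hc₁ hi
      · exact Real.rpow_le_rpow_of_exponent_le hn (by linarith)

end Parameters

section LowerBound

open Finset

variable {V : Type*} [DecidableEq V] [Fintype V] [Nonempty V] {r k : ℕ} {q : ℤ}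

lemma exists_uniform_hFree_le_card (hq : 1 ≤ q + r) (hk : q + r + 1 ≤ k)
    (hn : 2 * r ≤ Fintype.card V) {c : ℝ} (hc₀ : 0 ≤ c) (hc₁ : c ≤ 1) :
    ∃ E : Finset (Finset V), (∀ e ∈ E, #e = r) ∧ HFree r k q E ∧
      (c / (2 ^ r * r.factorial) - k * 2 ^ 2 ^ (k - q - 1).toNat * c ^ 2) *
        (Fintype.card V : ℝ) ^ ((r : ℝ) - 1 + ((q : ℝ) + r) / ((k : ℝ) - 1)) ≤ #E := by
  set n := Fintype.card V
  set t : ℝ := ((q : ℝ) + r) / ((k : ℝ) - 1)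
  set p : ℝ := c * n ^ (t - 1)
  have hn₁ : (1 : ℝ) ≤ n := mod_cast (Fintype.card_pos : 0 < n)
  have hqr : (1 : ℝ) ≤ q + r := mod_cast hq
  have hkR : (q : ℝ) + r + 1 ≤ k := mod_cast hk
  have hk₁ : (0 : ℝ) < k - 1 := by linarith
  have ht₁ : t ≤ 1 := (div_le_one hk₁).2 (by linarith)
  have hp₁ : p ≤ 1 := mul_le_one₀ hc₁ (by positivity)
    (Real.rpow_le_one_of_one_le_of_nonpos hn₁ (by linarith))
  have crowded_nonempty : ∀ F ∈ crowded V r k q, F.Nonempty := fun F hF => by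
    have := (mem_filter.1 hF).2.1
    exact card_pos.1 (by omega)
  have expected_crowded_le : ∑ F ∈ crowded V r k q, p ^ #F ≤
      k * 2 ^ 2 ^ (k - q - 1).toNat * (c ^ 2 * n ^ (r - 1 + t)) := by
    refine sum_crowded_pow_card_le (by omega) (by positivity) (by positivity) fun i hi₁ hi₂ => ?_
    refine rpow_mul_mul_rpow_sub_one_pow_le hn₁ hc₀ hc₁ (by omega) ?_
    calc
      (i - 1) * t ≤ (k - 1) * t := by gcongr
      _ = q + r := mul_div_cancel₀ _ hk₁.ne'
  have le_expected_edges : c / (2 ^ r * r.factorial) * (n : ℝ) ^ (r - 1 + t) ≤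
      p * #(powersetCard r (univ : Finset V)) := by
    rw [card_powersetCard, card_univ]
    exact mul_rpow_le_mul_rpow_sub_one_mul_choose Fintype.card_ne_zero hn hc₀ t
  obtain ⟨E, hEX, hcard, hE⟩ := exists_subset_le_card_forall_not_subset (p := p) (by positivity)
    hp₁ (powersetCard r univ) crowded_nonempty
  refine ⟨E, fun e he => (mem_powersetCard.1 (hEX he)).2,
    hFree_iff_forall_crowded_not_subset.2 hE, ?_⟩
  linarith

end LowerBound

/-- ex(n, H^{(r)}(k,q)) = Ω(n^{r-1+(q+r)/(k-1)}): there are a constant `c > 0` and `n₀`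
such that for every `n ≥ n₀` there is an `H^{(r)}(k,q)`-free `r`-uniform hypergraph on
`n` vertices with at least `c · n^{r-1+(q+r)/(k-1)}` edges. -/
theorem statement0 (r k : ℕ) (q : ℤ) (hr : 2 ≤ r) (hq : -(r : ℤ) + 1 ≤ q)
    (hk : (r : ℤ) + q + 1 ≤ (k : ℤ)) :
    ∃ c : ℝ, 0 < c ∧ ∃ n₀ : ℕ, ∀ n : ℕ, n₀ ≤ n →
      ∃ E : Finset (Finset (Fin n)), (∀ e ∈ E, e.card = r) ∧ HFree r k q E ∧
        c * (n : ℝ) ^ ((r : ℝ) - 1 + ((q : ℝ) + (r : ℝ)) / ((k : ℝ) - 1)) ≤ (E.card : ℝ) := by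
  set D : ℝ := 2 ^ r * r.factorial
  set K : ℝ := k * 2 ^ 2 ^ (k - q - 1).toNat
  have hD : 1 ≤ D := one_le_mul_of_one_le_of_one_le (one_le_pow₀ one_le_two)
    (mod_cast r.factorial_pos)
  have hK : 1 ≤ K := one_le_mul_of_one_le_of_one_le (mod_cast (by omega : 1 ≤ k))
    (one_le_pow₀ one_le_two)
  have hDK : 1 ≤ D * K := one_le_mul_of_one_le_of_one_le hD hK
  have hc : 1 / (2 * (D * K)) ≤ 1 := (div_le_one (by positivity)).2 (by linarith)
  -- `c = 1 / (2 * (D * K))` maximises `c / D - K * c ^ 2`.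
  refine ⟨1 / (2 * (D * K)) / (2 * D), by positivity, 2 * r, fun n hn => ?_⟩
  have : NeZero n := ⟨by omega⟩
  obtain ⟨E, hEr, hE, hcard⟩ := exists_uniform_hFree_le_card (V := Fin n) (r := r) (k := k)
    (q := q) (by omega) (by omega) (by simpa using hn) (by positivity) hc
  refine ⟨E, hEr, hE, ?_⟩
  have half : 1 / (2 * (D * K)) / D - K * (1 / (2 * (D * K))) ^ 2 =
      1 / (2 * (D * K)) / (2 * D) := by
    field_simp
    ring
  rwa [half, Fintype.card_fin] at hcard
end

section
/- Let q ≥ −1, k ≥ 2q+6 and n ≥ k be integers, let h = ⌊k/(q+3)⌋ and C = (q+2)^{1/h} (a real number). Then every H^{(2)}(k,q)-free simple graph on n vertices has fewer than C·n^{1+1/h} + (q+2)·n edges; that is, ex(n, H^{(2)}(k,q)) < C·n^{1+1/h} + (q+2)·n. -/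
/-
Write `t = q + 2`, so that freeness says: a set of more than `t` and at most `k` edges has at
least `2 - t` more vertices than edges. Suppose the graph has at least `(a + t) n` edges, where
`a ^ h = t n`. Deleting vertices of small degree leaves a nonempty subgraph whose non-isolated
vertices all have degree at least `a + t`; explore it breadth-first from one of them. Adding
`t` non-tree edges to the tree paths from their endpoints to the root produces `s + t` edges on
at most `s + 1` vertices, where `s` is the number of tree edges involved. When this happens close
enough to the root that `s + t ≤ k`, it contradicts freeness, so a vertex there lies on fewer than
`t` non-tree edges. Hence the levels grow by a factor `a` up to level `h - 1`. Into level `h` every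
vertex of level `h - 1` still sends at least `a` edges, but a vertex of level `h` may receive up
to `t` of them, so level `h` has at least `a ^ h / t = n` vertices. It also misses the root, which
is absurd.
-/

open Finset

/-- Graph counterpart of `H^{(2)}(k, t - 2)`-freeness: any set of more than `t` and at most `k`
edges spans at least `2 - t` more vertices than edges. Both sides are shifted to avoid
subtraction. -/
def IsLocallySparse {V : Type*} [DecidableEq V] (G : SimpleGraph V) (k t : ℕ) : Prop :=
  ∀ A : Finset (Sym2 V), (A : Set (Sym2 V)) ⊆ G.edgeSet → t < #A → #A ≤ k →
    #A + 2 ≤ #(A.biUnion Sym2.toFinset) + t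

/-- A breadth-first parent function for the component of `r` in `G`: the root is its own parent,
and the parent of any other vertex is a neighbour one step closer to the root. Vertices outside
the component are unconstrained. -/
structure IsBFSParent {V : Type*} (G : SimpleGraph V) (r : V) (p : V → V) : Prop where
  map_root : p r = r
  adj : ∀ ⦃v⦄, G.Reachable r v → v ≠ r → G.Adj v (p v)
  dist_add_one : ∀ ⦃v⦄, G.Reachable r v → v ≠ r → G.dist r (p v) + 1 = G.dist r v

open Classical in
/-- The vertices at distance exactly `j` from `r`. Reachability is required separately because
`SimpleGraph.dist` is zero between different components. -/
noncomputable def bfsLevel {V : Type*} [Fintype V] (G : SimpleGraph V) (r : V) (j : ℕ) :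
    Finset V :=
  {v | G.Reachable r v ∧ G.dist r v = j}

section BreadthFirst

variable {V : Type*} {G : SimpleGraph V} {r : V} {p : V → V}

theorem dist_le_dist_add_one_of_adj {x y : V} (hxy : G.Adj x y) :
    G.dist r y ≤ G.dist r x + 1 := by
  have := hxy.diff_dist_adj (u := r)
  omega

theorem exists_adj_dist_add_one_eq {v : V} (hv : G.Reachable r v) (hvr : v ≠ r) :
    ∃ u, G.Adj v u ∧ G.dist r u + 1 = G.dist r v := by
  obtain ⟨w, hw⟩ := hv.symm.exists_walk_length_eq_dist
  cases w with
  | nil => exact absurd rfl hvr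
  | @cons _ u _ hvu w =>
    refine ⟨u, hvu, ?_⟩
    have hu : G.dist u r ≤ w.length := SimpleGraph.dist_le w
    have hvu' : G.dist r v ≤ G.dist r u + 1 := dist_le_dist_add_one_of_adj hvu.symm
    rw [SimpleGraph.Walk.length_cons] at hw
    rw [SimpleGraph.dist_comm] at hu hw
    omega

theorem exists_isBFSParent (G : SimpleGraph V) (r : V) : ∃ p, IsBFSParent G r p := by
  have hparent (v : V) : ∃ u, (v = r → u = r) ∧ (G.Reachable r v → v ≠ r →
      G.Adj v u ∧ G.dist r u + 1 = G.dist r v) := by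
    by_cases hv : G.Reachable r v ∧ v ≠ r
    · obtain ⟨u, hu⟩ := exists_adj_dist_add_one_eq hv.1 hv.2
      exact ⟨u, fun h ↦ absurd h hv.2, fun _ _ ↦ hu⟩
    · exact ⟨r, fun _ ↦ rfl, fun hreach hvr ↦ absurd ⟨hreach, hvr⟩ hv⟩
  choose p hroot hp using hparent
  exact ⟨p, hroot r rfl, fun v hv hvr ↦ (hp v hv hvr).1, fun v hv hvr ↦ (hp v hv hvr).2⟩

namespace IsBFSParent

variable (hp : IsBFSParent G r p)
include hp

theorem reachable {v : V} (hv : G.Reachable r v) : G.Reachable r (p v) := by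
  by_cases hvr : v = r
  · rw [hvr, hp.map_root]
  · exact hv.trans (hp.adj hv hvr).reachable

theorem dist_parent {v : V} (hv : G.Reachable r v) : G.dist r (p v) = G.dist r v - 1 := by
  by_cases hvr : v = r
  · simp [hvr, hp.map_root]
  · exact Nat.eq_sub_of_add_eq (hp.dist_add_one hv hvr)

theorem reachable_iterate {v : V} (hv : G.Reachable r v) (i : ℕ) : G.Reachable r (p^[i] v) := by
  induction i with
  | zero => exact hv
  | succ i ih => simpa only [Function.iterate_succ_apply'] using hp.reachable ih

theorem dist_iterate {v : V} (hv : G.Reachable r v) (i : ℕ) :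
    G.dist r (p^[i] v) = G.dist r v - i := by
  induction i with
  | zero => rfl
  | succ i ih =>
    rw [Function.iterate_succ_apply', hp.dist_parent (hp.reachable_iterate hv i), ih,
      Nat.sub_sub]

theorem dist_eq_of_parent_eq {x y : V} (hy : G.Reachable r y) (hyx : y ≠ x) (h : p y = x) :
    G.dist r y = G.dist r x + 1 := by
  have hyr : y ≠ r := by
    rintro rfl
    exact hyx (hp.map_root.symm.trans h)
  rw [← h, hp.dist_add_one hy hyr]

theorem injOn_treeEdge : Set.InjOn (fun v ↦ s(v, p v)) {v | G.Reachable r v ∧ v ≠ r} := by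
  rintro u ⟨hu, hur⟩ v ⟨hv, hvr⟩ huv
  rcases Sym2.eq_iff.mp huv with ⟨h, -⟩ | ⟨hupv, hpuv⟩
  · exact h
  · have hdu := hp.dist_add_one hu hur
    have hdv := hp.dist_add_one hv hvr
    rw [hpuv] at hdu
    rw [← hupv] at hdv
    omega

theorem exists_ancestors [DecidableEq V] {X : Finset V} (hX : ∀ x ∈ X, G.Reachable r x) :
    ∃ S : Finset V, X ⊆ insert r S ∧ #S ≤ ∑ x ∈ X, G.dist r x ∧
      ∀ u ∈ S, (G.Reachable r u ∧ u ≠ r) ∧ p u ∈ insert r S := by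
  have eq_root_of_dist_le {x : V} (hx : G.Reachable r x) {i : ℕ} (hi : G.dist r x ≤ i) :
      p^[i] x = r := by
    refine ((hp.reachable_iterate hx i).dist_eq_zero_iff.mp ?_).symm
    rw [hp.dist_iterate hx, Nat.sub_eq_zero_of_le hi]
  let S := X.biUnion fun x ↦ (range (G.dist r x)).image fun i ↦ p^[i] x
  have iterate_mem {x : V} (hx : x ∈ X) (i : ℕ) : p^[i] x ∈ insert r S := by
    rcases lt_or_ge i (G.dist r x) with hi | hi
    · exact mem_insert_of_mem
        (mem_biUnion.mpr ⟨x, hx, mem_image_of_mem _ (mem_range.mpr hi)⟩)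
    · rw [eq_root_of_dist_le (hX x hx) hi]
      exact mem_insert_self _ _
  refine ⟨S, fun x hx ↦ iterate_mem hx 0, card_biUnion_le.trans (sum_le_sum fun x _ ↦ ?_),
    fun u hu ↦ ?_⟩
  · exact card_image_le.trans (card_range _).le
  · obtain ⟨x, hx, hu⟩ := mem_biUnion.mp hu
    obtain ⟨i, hi, rfl⟩ := mem_image.mp hu
    refine ⟨⟨hp.reachable_iterate (hX x hx) i, fun hroot ↦ ?_⟩, ?_⟩
    · have hdist := hp.dist_iterate (hX x hx) i
      rw [hroot, SimpleGraph.dist_self] at hdist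
      have := mem_range.mp hi
      omega
    · rw [← Function.iterate_succ_apply' p]
      exact iterate_mem hx (i + 1)

end IsBFSParent

theorem mem_bfsLevel [Fintype V] {j : ℕ} {v : V} :
    v ∈ bfsLevel G r j ↔ G.Reachable r v ∧ G.dist r v = j := by
  simp [bfsLevel]

theorem root_mem_bfsLevel_iff [Fintype V] {j : ℕ} : r ∈ bfsLevel G r j ↔ j = 0 := by
  simp [mem_bfsLevel, eq_comm]

end BreadthFirst

namespace IsLocallySparse

variable {V : Type*} [DecidableEq V] {G : SimpleGraph V} {k t : ℕ}

theorem mono {H : SimpleGraph V} (hG : IsLocallySparse G k t) (hHG : H ≤ G) :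
    IsLocallySparse H k t :=
  fun A hA ↦ hG A (hA.trans (SimpleGraph.edgeSet_mono hHG))

section NonTreeEdges

variable {r : V} {p : V → V} (hG : IsLocallySparse G k t) (ht : 0 < t)
  (hp : IsBFSParent G r p)
include hG ht hp

theorem card_nontree_lt {X : Finset V} (hX : ∀ x ∈ X, G.Reachable r x)
    {B : Finset (Sym2 V)} (hBG : (B : Set (Sym2 V)) ⊆ G.edgeSet)
    (hBX : ∀ e ∈ B, e.toFinset ⊆ X) (hBp : ∀ v, s(v, p v) ∉ B)
    (hk : ∑ x ∈ X, G.dist r x + #B ≤ k) : #B < t := by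
  by_contra! htB
  obtain ⟨S, hXS, hScard, hS⟩ := hp.exists_ancestors hX
  let T : Finset (Sym2 V) := S.image fun u ↦ s(u, p u)
  have hTcard : #T = #S := card_image_of_injOn (hp.injOn_treeEdge.mono fun u hu ↦ (hS u hu).1)
  have hTB : #(T ∪ B) = #S + #B := by
    rw [card_union_of_disjoint, hTcard]
    rw [disjoint_left]
    rintro e he
    obtain ⟨u, -, rfl⟩ := mem_image.mp he
    exact hBp u
  have hTBG : ((T ∪ B : Finset (Sym2 V)) : Set (Sym2 V)) ⊆ G.edgeSet := by
    rw [coe_union]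
    refine Set.union_subset (fun e he ↦ ?_) hBG
    obtain ⟨u, hu, rfl⟩ := mem_image.mp he
    exact hp.adj (hS u hu).1.1 (hS u hu).1.2
  have hspan : (T ∪ B).biUnion Sym2.toFinset ⊆ insert r S := by
    refine biUnion_subset.mpr fun e he ↦ ?_
    rcases mem_union.mp he with he | he
    · obtain ⟨u, hu, rfl⟩ := mem_image.mp he
      rw [Sym2.toFinset_mk_eq, insert_subset_iff, singleton_subset_iff]
      exact ⟨mem_insert_of_mem hu, (hS u hu).2⟩
    · exact (hBX e he).trans hXS
  have hSpos : 0 < #S := by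
    obtain ⟨e, he⟩ := card_pos.mp (ht.trans_le htB)
    have hcard : #e.toFinset = 2 :=
      Sym2.card_toFinset_of_not_isDiag e (G.not_isDiag_of_mem_edgeSet (hBG he))
    have := (card_le_card ((hBX e he).trans hXS)).trans (card_insert_le r S)
    omega
  have hsparse := hG (T ∪ B) hTBG (by omega) (by omega)
  have hvertices := (card_le_card hspan).trans (card_insert_le r S)
  omega

variable [Fintype V] [DecidableRel G.Adj]

theorem card_nontree_neighbors_lt {x : V} (hx : G.Reachable r x) {m : ℕ}
    (hk : G.dist r x + t * (m + 1) ≤ k) :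
    #{y ∈ G.neighborFinset x | G.dist r y ≤ m ∧ p y ≠ x ∧ y ≠ p x} < t := by
  by_contra! htF
  obtain ⟨F, hF, hFcard⟩ := exists_subset_card_eq htF
  replace hF (y) (hy : y ∈ F) : G.Adj x y ∧ G.dist r y ≤ m ∧ p y ≠ x ∧ y ≠ p x := by
    simpa using hF hy
  let B : Finset (Sym2 V) := F.image fun y ↦ s(x, y)
  have hBcard : #B = t := by
    rw [← hFcard, card_image_of_injective _ fun y z ↦ Sym2.congr_right.mp]
  have hdist : ∑ y ∈ insert x F, G.dist r y + #B ≤ k := by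
    have hxF : x ∉ F := fun h ↦ (hF x h).1.ne rfl
    have hsum : ∑ y ∈ F, G.dist r y ≤ t * m := by
      simpa [hFcard] using sum_le_card_nsmul F (G.dist r) m fun y hy ↦ (hF y hy).2.1
    rw [sum_insert hxF, hBcard]
    linarith
  refine (hG.card_nontree_lt ht hp (X := insert x F) (B := B) ?_ ?_ ?_ ?_ hdist).ne hBcard
  · simpa [hx] using fun y hy ↦ hx.trans (hF y hy).1.reachable
  · rintro e he
    obtain ⟨y, hy, rfl⟩ := mem_image.mp he
    exact (hF y hy).1
  · rintro e he
    obtain ⟨y, hy, rfl⟩ := mem_image.mp he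
    simp [Sym2.toFinset_mk_eq, insert_subset_iff, hy]
  · rintro v hv
    obtain ⟨y, hy, hxy⟩ := mem_image.mp hv
    obtain ⟨-, -, hpy, hpx⟩ := hF y hy
    rcases Sym2.eq_iff.mp hxy with ⟨rfl, rfl⟩ | ⟨rfl, rfl⟩
    · exact hpx rfl
    · exact hpy rfl

theorem card_nonchild_neighbors_le {x : V} (hx : G.Reachable r x) {m : ℕ}
    (hk : G.dist r x + t * (m + 1) ≤ k) :
    #{y ∈ G.neighborFinset x | G.dist r y ≤ m ∧ p y ≠ x} ≤ t := by
  have hlt := hG.card_nontree_neighbors_lt ht hp hx hk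
  have herase := pred_card_le_card_erase (a := p x)
    (s := {y ∈ G.neighborFinset x | G.dist r y ≤ m ∧ p y ≠ x})
  simp only [← filter_ne', filter_filter, and_assoc] at herase
  omega

theorem degree_le_add_card {x : V} (hx : G.Reachable r x) {m : ℕ}
    (hk : G.dist r x + t * (m + 1) ≤ k) :
    G.degree x ≤ t + #{y ∈ G.neighborFinset x | G.dist r y ≤ m → p y = x} := by
  have hle := hG.card_nonchild_neighbors_le ht hp hx hk
  have hsplit := card_filter_add_card_filter_not (s := G.neighborFinset x)
    fun y ↦ G.dist r y ≤ m → p y = x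
  simp only [Classical.not_imp, ← ne_eq, G.card_neighborFinset_eq_degree] at hsplit
  omega

theorem mul_card_bfsLevel_le {a : ℝ} {j : ℕ} (hk : j + t * (j + 2) ≤ k)
    (hdeg : ∀ x ∈ bfsLevel G r j, a + t ≤ G.degree x) :
    a * #(bfsLevel G r j) ≤ #(bfsLevel G r (j + 1)) := by
  have hchildren (x) (hx : x ∈ bfsLevel G r j) :
      a ≤ #((bfsLevel G r (j + 1)).bipartiteAbove (fun x y ↦ p y = x) x) := by
    obtain ⟨hreach, hdist⟩ := mem_bfsLevel.mp hx
    have hle := hG.degree_le_add_card ht hp hreach (m := j + 1) (by rwa [hdist])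
    have hsub : {y ∈ G.neighborFinset x | G.dist r y ≤ j + 1 → p y = x} ⊆
        (bfsLevel G r (j + 1)).bipartiteAbove (fun x y ↦ p y = x) x := by
      intro y hy
      obtain ⟨hxy, hpy⟩ : G.Adj x y ∧ (G.dist r y ≤ j + 1 → p y = x) := by simpa using hy
      have hy_reach : G.Reachable r y := hreach.trans hxy.reachable
      replace hpy : p y = x := hpy (hdist ▸ dist_le_dist_add_one_of_adj hxy)
      have hy_dist := hp.dist_eq_of_parent_eq hy_reach hxy.ne' hpy
      simp [mem_bfsLevel, hy_reach, hpy, hy_dist, hdist]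
    have hcard : (G.degree x : ℝ) ≤ t + #(bipartiteAbove _ _ x) :=
      mod_cast hle.trans (Nat.add_le_add_left (card_le_card hsub) t)
    linarith [hdeg x hx]
  have hparents (y) (_ : y ∈ bfsLevel G r (j + 1)) :
      (#((bfsLevel G r j).bipartiteBelow (fun x y ↦ p y = x) y) : ℝ) ≤ 1 := by
    refine mod_cast card_le_one.mpr fun u hu v hv ↦ ?_
    exact ((mem_bipartiteBelow _).mp hu).2.symm.trans ((mem_bipartiteBelow _).mp hv).2
  simpa [mul_comm] using card_nsmul_le_card_nsmul _ hchildren hparents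

theorem mul_card_bfsLevel_le_mul {a : ℝ} {j : ℕ} (hk : (j + 1) * (t + 1) ≤ k)
    (hdeg : ∀ x ∈ bfsLevel G r j, a + t ≤ G.degree x) :
    a * #(bfsLevel G r j) ≤ t * #(bfsLevel G r (j + 1)) := by
  have hup (x) (hx : x ∈ bfsLevel G r j) :
      a ≤ #((bfsLevel G r (j + 1)).bipartiteAbove G.Adj x) := by
    obtain ⟨hreach, hdist⟩ := mem_bfsLevel.mp hx
    have hle := hG.degree_le_add_card ht hp hreach (m := j) (by rw [hdist]; linarith)
    have hsub : {y ∈ G.neighborFinset x | G.dist r y ≤ j → p y = x} ⊆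
        (bfsLevel G r (j + 1)).bipartiteAbove G.Adj x := by
      intro y hy
      obtain ⟨hxy, hpy⟩ : G.Adj x y ∧ (G.dist r y ≤ j → p y = x) := by simpa using hy
      have hy_reach : G.Reachable r y := hreach.trans hxy.reachable
      have hy_dist : G.dist r y = j + 1 := by
        refine le_antisymm (hdist ▸ dist_le_dist_add_one_of_adj hxy) ?_
        by_contra! hlt
        have := hp.dist_eq_of_parent_eq hy_reach hxy.ne' (hpy (by omega))
        omega
      simp [mem_bfsLevel, hy_reach, hxy, hy_dist]
    have hcard : (G.degree x : ℝ) ≤ t + #(bipartiteAbove _ _ x) :=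
      mod_cast hle.trans (Nat.add_le_add_left (card_le_card hsub) t)
    linarith [hdeg x hx]
  have hdown (y) (hy : y ∈ bfsLevel G r (j + 1)) :
      (#((bfsLevel G r j).bipartiteBelow G.Adj y) : ℝ) ≤ t := by
    obtain ⟨hreach, hdist⟩ := mem_bfsLevel.mp hy
    refine mod_cast le_trans (card_le_card fun x hx ↦ ?_)
      (hG.card_nonchild_neighbors_le ht hp hreach (m := j) (by rw [hdist]; linarith))
    obtain ⟨hx, hxy⟩ := (mem_bipartiteBelow _).mp hx
    obtain ⟨hx_reach, hx_dist⟩ := mem_bfsLevel.mp hx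
    have hpx : p x ≠ y := fun hpx ↦ by
      have := hp.dist_eq_of_parent_eq hx_reach hxy.ne hpx
      omega
    simp [hxy.symm, hx_dist, hpx]
  simpa [mul_comm] using card_nsmul_le_card_nsmul _ hup hdown

theorem pow_le_card_bfsLevel {a : ℝ} (ha : 0 ≤ a)
    (hdeg : ∀ x, G.Reachable r x → a + t ≤ G.degree x) {j : ℕ} (hk : (j + 1) * (t + 1) ≤ k) :
    a ^ j ≤ #(bfsLevel G r j) := by
  induction j with
  | zero =>
    have hpos : 0 < #(bfsLevel G r 0) := card_pos.mpr ⟨r, root_mem_bfsLevel_iff.mpr rfl⟩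
    rw [pow_zero]
    exact mod_cast hpos
  | succ j ih =>
    calc a ^ (j + 1) = a * a ^ j := pow_succ' a j
      _ ≤ a * #(bfsLevel G r j) := by gcongr; exact ih (by linarith)
      _ ≤ #(bfsLevel G r (j + 1)) :=
        hG.mul_card_bfsLevel_le ht hp (by linarith) fun x hx ↦ hdeg x (mem_bfsLevel.mp hx).1

end NonTreeEdges

variable [Fintype V] [DecidableRel G.Adj]

theorem pow_lt_mul_card (hG : IsLocallySparse G k t) (ht : 0 < t) {h : ℕ} (hh : 0 < h)
    (hk : h * (t + 1) ≤ k) {a : ℝ} (ha : 0 ≤ a) {r : V}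
    (hdeg : ∀ x, G.Reachable r x → a + t ≤ G.degree x) :
    a ^ h < t * Fintype.card V := by
  obtain ⟨j, rfl⟩ := Nat.exists_eq_add_one.mpr hh
  obtain ⟨p, hp⟩ := exists_isBFSParent G r
  have hcard : #(bfsLevel G r (j + 1)) < Fintype.card V :=
    card_lt_univ_of_notMem (mt root_mem_bfsLevel_iff.mp j.succ_ne_zero)
  calc a ^ (j + 1) = a * a ^ j := pow_succ' a j
    _ ≤ a * #(bfsLevel G r j) := by gcongr; exact hG.pow_le_card_bfsLevel ht hp ha hdeg hk
    _ ≤ t * #(bfsLevel G r (j + 1)) :=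
      hG.mul_card_bfsLevel_le_mul ht hp hk fun x hx ↦ hdeg x (mem_bfsLevel.mp hx).1
    _ < t * Fintype.card V := by gcongr

end IsLocallySparse

theorem exists_subgraph_forall_le_degree {V : Type*} [Fintype V] [Nonempty V]
    (G : SimpleGraph V) [Fintype G.edgeSet] {D : ℝ} (hD : 0 < D)
    (hG : D * Fintype.card V ≤ #G.edgeFinset) :
    ∃ (H : SimpleGraph V) (_ : DecidableRel H.Adj), H ≤ G ∧ H ≠ ⊥ ∧
      ∀ v, 0 < H.degree v → D ≤ H.degree v := by
  classical
  let IsDense (H : SimpleGraph V) : Prop :=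
    H ≠ ⊥ ∧ D * H.support.ncard ≤ H.edgeSet.ncard
  have hGdense : IsDense G := by
    have hsupport : (G.support.ncard : ℝ) ≤ Fintype.card V :=
      mod_cast G.support.ncard_le_card.trans_eq Nat.card_eq_fintype_card
    have hpos : (0 : ℝ) < #G.edgeFinset := (by positivity : 0 < D * Fintype.card V).trans_le hG
    refine ⟨by simpa using hpos, ?_⟩
    rw [Set.ncard_eq_toFinset_card' G.edgeSet]
    exact (mul_le_mul_of_nonneg_left hsupport hD.le).trans hG
  obtain ⟨H, hHG, ⟨hbot, hdense⟩, hmin⟩ :=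
    (Set.toFinite {H | IsDense H}).exists_le_minimal hGdense
  refine ⟨H, inferInstance, hHG, hbot, fun v hv ↦ ?_⟩
  by_contra! hvD
  let H' := H.deleteIncidenceSet v
  have hedges : H'.edgeSet.ncard + H.degree v = H.edgeSet.ncard := by
    rw [SimpleGraph.edgeSet_deleteIncidenceSet, ← H.card_incidenceFinset_eq_degree,
      SimpleGraph.incidenceFinset, ← Set.ncard_eq_toFinset_card']
    exact Set.ncard_sdiff_add_ncard_of_subset (H.incidenceSet_subset v)
  have hsupport : H'.support.ncard + 1 ≤ H.support.ncard := by
    have hv_support : v ∈ H.support := (H.degree_pos_iff_mem_support v).mp hv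
    rw [← Set.ncard_sdiff_singleton_add_one hv_support]
    exact Nat.add_le_add_right (Set.ncard_le_ncard (H.support_deleteIncidenceSet_subset v)) 1
  have hdense' : D * H'.support.ncard < H'.edgeSet.ncard := by
    rify at hedges hsupport
    nlinarith
  have hbot' : H' ≠ ⊥ := fun h ↦ by
    simp [h] at hdense'
  obtain ⟨w, hvw⟩ := (H.degree_pos_iff_exists_adj v).mp hv
  have hvw' : H'.Adj v w := hmin ⟨hbot', hdense'.le⟩ (H.deleteIncidenceSet_le v) hvw
  exact (SimpleGraph.deleteIncidenceSet_adj.mp hvw').2.1 rfl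

theorem HFree.isLocallySparse {V : Type*} [DecidableEq V] {k t : ℕ} {E : Finset (Finset V)}
    (hE : HFree 2 k ((t : ℤ) - 2) E) :
    IsLocallySparse (SimpleGraph.fromEdgeSet {e | e.toFinset ∈ E}) k t := by
  intro A hA htA hAk
  have hinj : Function.Injective (Sym2.toFinset : Sym2 V → Finset V) := fun e f hef ↦
    Sym2.ext fun v ↦ by rw [← Sym2.mem_toFinset, hef, Sym2.mem_toFinset]
  have hAE : A.image Sym2.toFinset ⊆ E := image_subset_iff.mpr fun e he ↦ by
    have := hA he
    rw [SimpleGraph.edgeSet_fromEdgeSet] at this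
    exact this.1
  have hcover := hE #A (by omega) hAk _ hAE (card_image_of_injective A hinj)
  simp only [image_biUnion, id_def] at hcover
  change _ ≤ (#(A.biUnion Sym2.toFinset) : ℤ) at hcover
  omega

theorem card_le_card_edgeFinset_fromEdgeSet {V : Type*} [Fintype V] [DecidableEq V]
    {E : Finset (Finset V)} (hE : ∀ e ∈ E, #e = 2) :
    #E ≤ #(SimpleGraph.fromEdgeSet {e : Sym2 V | e.toFinset ∈ E}).edgeFinset := by
  refine (card_le_card fun e he ↦ ?_).trans (card_image_le (f := Sym2.toFinset))
  obtain ⟨x, y, hxy, rfl⟩ := card_eq_two.mp (hE e he)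
  exact mem_image.mpr ⟨s(x, y), by simpa [hxy, Sym2.toFinset_mk_eq] using he, Sym2.toFinset_mk_eq⟩

theorem IsLocallySparse.card_edgeFinset_lt {V : Type*} [Fintype V] [Nonempty V] [DecidableEq V]
    {G : SimpleGraph V} [Fintype G.edgeSet] {k t h : ℕ} (hG : IsLocallySparse G k t)
    (ht : 0 < t) (hh : 0 < h) (hk : h * (t + 1) ≤ k) :
    (#G.edgeFinset : ℝ) <
      (t : ℝ) ^ (1 / (h : ℝ)) * (Fintype.card V : ℝ) ^ (1 + 1 / (h : ℝ)) + t * Fintype.card V := by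
  set n : ℝ := (Fintype.card V : ℝ)
  have hn : 0 < n := Nat.cast_pos.mpr Fintype.card_pos
  set a : ℝ := (t * n) ^ (1 / (h : ℝ)) with ha
  have ha_pow : a ^ h = t * n := by
    rw [ha, one_div, Real.rpow_inv_natCast_pow (by positivity) hh.ne']
  have ha_mul : (t : ℝ) ^ (1 / (h : ℝ)) * n ^ (1 + 1 / (h : ℝ)) = a * n := by
    rw [ha, Real.mul_rpow t.cast_nonneg hn.le, Real.rpow_add hn, Real.rpow_one]
    ring
  rw [ha_mul, ← add_mul]
  by_contra! hdense
  obtain ⟨H, _, hHG, hbot, hdeg⟩ :=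
    exists_subgraph_forall_le_degree G (by positivity : 0 < a + t) hdense
  obtain ⟨r, s, hrs⟩ := SimpleGraph.ne_bot_iff_exists_adj.mp hbot
  have hdeg_r (x) (hx : H.Reachable r x) : a + t ≤ H.degree x := by
    refine hdeg x ?_
    by_cases hxr : r = x
    · exact hxr ▸ (H.degree_pos_iff_exists_adj r).mpr ⟨s, hrs⟩
    · exact hx.degree_pos_right hxr
  exact ((hG.mono hHG).pow_lt_mul_card ht hh hk (by positivity) hdeg_r).ne ha_pow

theorem statement1_general {V : Type*} [Fintype V] [Nonempty V] [DecidableEq V]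
    (k : ℕ) (q h : ℤ) (C : ℝ) (hq : -1 ≤ q) (hk : q + 3 ≤ (k : ℤ))
    (hh : h = (k : ℤ) / (q + 3))
    (hC : C = ((q : ℝ) + 2) ^ ((1 : ℝ) / (h : ℝ)))
    (E : Finset (Finset V)) (hunif : ∀ e ∈ E, e.card = 2) (hfree : HFree 2 k q E) :
    (E.card : ℝ) < C * (Fintype.card V : ℝ) ^ ((1 : ℝ) + 1 / (h : ℝ)) +
      ((q : ℝ) + 2) * (Fintype.card V : ℝ) := by
  obtain ⟨t, ht⟩ : ∃ t : ℕ, q + 2 = t := Int.eq_ofNat_of_zero_le (by omega)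
  obtain ⟨m, rfl⟩ : ∃ m : ℕ, h = m :=
    Int.eq_ofNat_of_zero_le (hh ▸ Int.ediv_nonneg (by omega) (by omega))
  obtain rfl : q = t - 2 := by omega
  have hm : (1 : ℤ) ≤ m := by
    rw [hh, Int.le_ediv_iff_mul_le (by omega)]
    omega
  have hmk : (m : ℤ) * (t + 1) ≤ k := by
    have := Int.ediv_mul_le (k : ℤ) (b := (t : ℤ) - 2 + 3) (by omega)
    rwa [← hh, show (t : ℤ) - 2 + 3 = t + 1 by ring] at this
  have htR : (((t : ℤ) - 2 : ℤ) : ℝ) + 2 = t := by push_cast; ring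
  rw [hC, htR, Int.cast_natCast]
  calc (#E : ℝ) ≤ _ := mod_cast card_le_card_edgeFinset_fromEdgeSet hunif
    _ < _ := hfree.isLocallySparse.card_edgeFinset_lt (by omega) (mod_cast hm) (mod_cast hmk)

/-- For `q ≥ -1`, `k ≥ 2q+6`, `n ≥ k`, `h = ⌊k/(q+3)⌋` and `C = (q+2)^{1/h}`, every
`H^{(2)}(k,q)`-free simple graph on `n` vertices has fewer than
`C·n^{1+1/h} + (q+2)·n` edges. -/
theorem statement1 (k n : ℕ) (q h : ℤ) (C : ℝ)
    (hq : -1 ≤ q) (hk : 2 * q + 6 ≤ (k : ℤ)) (hn : k ≤ n)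
    (hh : h = (k : ℤ) / (q + 3))
    (hC : C = ((q : ℝ) + 2) ^ ((1 : ℝ) / (h : ℝ)))
    (E : Finset (Finset (Fin n))) (hunif : ∀ e ∈ E, e.card = 2)
    (hfree : HFree 2 k q E) :
    (E.card : ℝ) < C * (n : ℝ) ^ ((1 : ℝ) + 1 / (h : ℝ)) + ((q : ℝ) + 2) * (n : ℝ) := by
  have : Nonempty (Fin n) := Fin.pos_iff_nonempty.mp (by omega)
  simpa only [Fintype.card_fin] using
    statement1_general k q h C hq (by omega) hh hC E hunif hfree
end

section
/- Let q ≥ −1 and k ≥ q+3 be integers. Then there exists a constant d = d(k,q) (depending only on k and q) such that for every integer n ≥ k−q−1, f^{(2)}(n,k−q−1,k) − ex(n, H^{(2)}(k,q)) ≤ d. -/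
/-- `ex(n, H^{(r)}(k,q))`: the maximum number of edges of an `H^{(r)}(k,q)`-free
`r`-uniform hypergraph on `n` vertices. -/
noncomputable def exH (n r k : ℕ) (q : ℤ) : ℕ :=
  sSup {m | ∃ E : Finset (Finset (Fin n)),
    (∀ e ∈ E, e.card = r) ∧ HFree r k q E ∧ E.card = m}

/-- `f^{(r)}(n,v,k)`: one plus the maximum number of edges of an `r`-uniform hypergraph
on `n` vertices in which every `k` pairwise distinct edges cover at least `v + 1`
vertices. -/
noncomputable def fBES (n r k : ℕ) (v : ℤ) : ℕ :=
  sSup {m | ∃ E : Finset (Finset (Fin n)),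
    (∀ e ∈ E, e.card = r) ∧
    (∀ E' ⊆ E, E'.card = k → v + 1 ≤ ((E'.biUnion id).card : ℤ)) ∧ E.card = m} + 1

/-!
Call a set of edges small if it has at most `k` edges. Let `E` be a graph in which any `k` edges
cover at least `k - q` vertices. If a small `S ⊆ E` covers fewer than `#S - q` vertices, then adding
an edge of `E` that meets `S` keeps it deficient, so `S` cannot grow to `k` edges: it lies in a
union of components of `E` with fewer than `k` edges. Let `E₁` be the set of edges lying in such
unions and let `W` be its vertex set. Then `E \ E₁` has no small deficient subset, and all degrees
in `E₁` are below `k`, whence `2 * #E₁ ≤ k * #W`.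

It remains to exchange `E₁` for a graph on `W` in which every small set of edges is a forest and
which has at least `k * #W / 2 - O_k(1)` edges. An edge-maximal graph of maximum degree at most `k`
with that forest property will do: two vertices of degree less than `k` must be at bounded distance
from each other, so there are `O_k(1)` of them.
-/

section

open Finset

variable {V : Type*} [DecidableEq V] {E F S T : Finset (Finset V)}

/-- Local sparsity: every nonempty set `S` of at most `k` edges covers at least `#S - q` vertices.
For graphs and `q ≥ -1` this is `H^{(2)}(k,q)`-freeness, since a set of at most `q + 2` edges
satisfies the bound trivially; `q = -1` says that every set of at most `k` edges is a forest. -/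
def IsSparse (k : ℕ) (q : ℤ) (E : Finset (Finset V)) : Prop :=
  ∀ S ⊆ E, S.Nonempty → #S ≤ k → (#S : ℤ) - q ≤ #(S.biUnion id)

/-- The degree of the vertex `v`: the number of edges of `E` containing it. -/
def edgeDegree (E : Finset (Finset V)) (v : V) : ℕ :=
  #{e ∈ E | v ∈ e}

/-- The ball of radius `j` around `u`: the vertices joined to `u` by a walk of at most `j` edges
of `E`. It contains `u` even if no edge does. -/
def edgeBall (E : Finset (Finset V)) (u : V) : ℕ → Finset V
  | 0 => {u}
  | j + 1 => edgeBall E u j ∪ {e ∈ E | ¬ Disjoint e (edgeBall E u j)}.biUnion id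

/-- `S` consists of all the edges in some of the connected components of `E`. -/
def IsComponentUnion (E S : Finset (Finset V)) : Prop :=
  S ⊆ E ∧ Disjoint (S.biUnion id) ((E \ S).biUnion id)

open Classical in
/-- The edges of `E` lying in a connected component with fewer than `k` edges. Allowing `S` to be
a union of several components does not change the set and avoids speaking of connectedness. -/
noncomputable def smallComponents (k : ℕ) (E : Finset (Finset V)) : Finset (Finset V) :=
  {e ∈ E | ∃ S, IsComponentUnion E S ∧ #S < k ∧ e ∈ S}

theorem disjoint_of_disjoint_biUnion_id (hF : ∀ e ∈ F, e.Nonempty)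
    (h : Disjoint (E.biUnion id) (F.biUnion id)) : Disjoint E F :=
  disjoint_left.2 fun e heE heF ↦ (hF e heF).ne_empty <| disjoint_self.1 <|
    h.mono (subset_biUnion_of_mem id heE) (subset_biUnion_of_mem id heF)

namespace IsSparse

variable {k : ℕ} {p q : ℤ}

theorem hFree {r : ℕ} (hE : IsSparse k q E) (hr : 0 < q + r + 1) : HFree r k q E := by
  rintro _ hi hik S hS rfl
  exact hE S hS (card_pos.1 (by omega)) hik

theorem union (hE : IsSparse k q E) (hF : IsSparse k p F) (hp : p ≤ 0) (hpq : p ≤ q)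
    (hEF : Disjoint (E.biUnion id) (F.biUnion id)) : IsSparse k q (E ∪ F) := by
  intro S hS hne hSk
  have hSE : S ∩ E ⊆ E := inter_subset_right
  have hSF : S \ E ⊆ F := sdiff_le_iff.2 hS
  have hcard : #(S ∩ E) + #(S \ E) = #S := card_inter_add_card_sdiff S E
  have hcover : #(S.biUnion id) = #((S ∩ E).biUnion id) + #((S \ E).biUnion id) := by
    have hdisj : Disjoint ((S ∩ E).biUnion id) ((S \ E).biUnion id) :=
      hEF.mono (biUnion_subset_biUnion_of_subset_left id hSE)
        (biUnion_subset_biUnion_of_subset_left id hSF)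
    rw [← card_union_of_disjoint hdisj, ← union_biUnion, union_comm, sdiff_union_inter]
  rcases (S ∩ E).eq_empty_or_nonempty with hE₀ | hE₀
  · rw [hE₀, card_empty, zero_add] at hcard
    have hF₀ : (S \ E).Nonempty := card_pos.1 (hcard ▸ hne.card_pos)
    have hcoverF := hF (S \ E) hSF hF₀ (by omega)
    omega
  · have hcoverE := hE (S ∩ E) hSE hE₀ (by omega)
    rcases (S \ E).eq_empty_or_nonempty with hF₀ | hF₀
    · rw [hF₀, card_empty] at hcard
      omega
    · have hcoverF := hF (S \ E) hSF hF₀ (by omega)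
      omega

theorem card_lt_card_insert (hF : IsSparse k (-1) F) (hT : T ⊆ F) (hTk : #T ≤ k) (v : V) :
    #T < #(insert v (T.biUnion id)) := by
  rcases T.eq_empty_or_nonempty with rfl | hne
  · simp
  · have hcover := hF T hT hne hTk
    have hle := card_le_card (subset_insert v (T.biUnion id))
    omega

end IsSparse

section Ball

variable {u : V} {j : ℕ}

theorem edgeBall_subset_succ (E : Finset (Finset V)) (u : V) (j : ℕ) :
    edgeBall E u j ⊆ edgeBall E u (j + 1) :=
  subset_union_left

theorem edgeBall_mono (E : Finset (Finset V)) (u : V) : Monotone (edgeBall E u) :=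
  monotone_nat_of_le_succ (edgeBall_subset_succ E u)

theorem edgeBall_subset_edgeBall (hEF : E ⊆ F) (u : V) (j : ℕ) :
    edgeBall E u j ⊆ edgeBall F u j := by
  induction j with
  | zero => exact Subset.rfl
  | succ j ih =>
    refine union_subset_union ih (biUnion_subset_biUnion_of_subset_left id fun e he ↦ ?_)
    rw [mem_filter] at he ⊢
    exact ⟨hEF he.1, fun h ↦ he.2 (h.mono_right ih)⟩

theorem self_mem_edgeBall (E : Finset (Finset V)) (u : V) (j : ℕ) : u ∈ edgeBall E u j :=
  edgeBall_mono E u j.zero_le (mem_singleton_self u)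

theorem subset_edgeBall_succ {e : Finset V} (he : e ∈ E) (h : ¬ Disjoint e (edgeBall E u j)) :
    e ⊆ edgeBall E u (j + 1) :=
  (subset_biUnion_of_mem id (mem_filter.2 ⟨he, h⟩)).trans subset_union_right

theorem card_filter_not_disjoint_le {D : ℕ} (hD : ∀ v, edgeDegree E v ≤ D) (B : Finset V) :
    #{e ∈ E | ¬ Disjoint e B} ≤ #B * D := by
  have hsub : {e ∈ E | ¬ Disjoint e B} ⊆ B.biUnion fun v ↦ {e ∈ E | v ∈ e} := by
    intro e he
    obtain ⟨heE, v, hve, hvB⟩ := by simpa only [mem_filter, not_disjoint_iff] using he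
    exact mem_biUnion.2 ⟨v, hvB, mem_filter.2 ⟨heE, hve⟩⟩
  exact (card_le_card hsub).trans (card_biUnion_le_card_mul _ _ D fun v _ ↦ hD v)

theorem card_edgeBall_le {r D : ℕ} (hr : ∀ e ∈ E, #e ≤ r) (hD : ∀ v, edgeDegree E v ≤ D)
    (u : V) (j : ℕ) : #(edgeBall E u j) ≤ (1 + D * r) ^ j := by
  induction j with
  | zero => exact (card_singleton u).le
  | succ j ih =>
    set B := edgeBall E u j
    calc #(B ∪ {e ∈ E | ¬ Disjoint e B}.biUnion id)
        ≤ #B + #({e ∈ E | ¬ Disjoint e B}.biUnion id) := card_union_le _ _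
      _ ≤ #B + #{e ∈ E | ¬ Disjoint e B} * r := by
        gcongr
        exact card_biUnion_le_card_mul _ _ r fun e he ↦ hr e (mem_filter.1 he).1
      _ ≤ #B + #B * D * r := by
        gcongr
        exact card_filter_not_disjoint_le hD B
      _ = #B * (1 + D * r) := by ring
      _ ≤ (1 + D * r) ^ (j + 1) := by
        rw [pow_succ]
        gcongr

/-- `A` is the component of `u` in `T`: a largest subset whose vertices are as close to `u` as its
number of edges allows must absorb every edge it meets. -/
theorem exists_biUnion_subset_edgeBall (T : Finset (Finset V)) (u : V) :
    ∃ A ⊆ T, A.biUnion id ⊆ edgeBall T u #A ∧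
      Disjoint (insert u (A.biUnion id)) ((T \ A).biUnion id) := by
  obtain ⟨A, hA⟩ := {A ∈ T.powerset | A.biUnion id ⊆ edgeBall T u #A}.exists_maximal
    ⟨∅, by simp⟩
  obtain ⟨hAT, hAball⟩ := by simpa only [mem_filter, mem_powerset] using hA.prop
  refine ⟨A, hAT, hAball, (disjoint_biUnion_right _ _ _).2 fun e he ↦ ?_⟩
  obtain ⟨heT, heA⟩ := mem_sdiff.1 he
  by_contra hmeet
  have hball : insert u (A.biUnion id) ⊆ edgeBall T u #A :=
    insert_subset (self_mem_edgeBall T u _) hAball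
  have he_ball : e ⊆ edgeBall T u (#A + 1) :=
    subset_edgeBall_succ heT fun h ↦ hmeet (h.mono_right hball).symm
  refine heA (insert_eq_self.1 (hA.eq_of_ge ?_ (subset_insert e A)))
  rw [mem_filter, mem_powerset, card_insert_of_notMem heA, biUnion_insert]
  exact ⟨insert_subset heT hAT, union_subset he_ball (hAball.trans (edgeBall_subset_succ T u _))⟩

end Ball

section SparseGraph

variable {k D : ℕ} {u v : V} {X : Finset V}

/-- The component of `u` in `T` does not reach `v`, so `u` and `v` each contribute an extra vertex
to their own side. -/
theorem IsSparse.card_add_two_le (hF : IsSparse k (-1) F) (hv : v ∉ edgeBall F u k)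
    (hT : T ⊆ F) (hTk : #T ≤ k) : #T + 2 ≤ #(insert u (insert v (T.biUnion id))) := by
  obtain ⟨A, hAT, hAball, hdisj⟩ := exists_biUnion_subset_edgeBall T u
  have hcard : #(T \ A) + #A = #T := card_sdiff_add_card_eq_card hAT
  have hvA : v ∉ insert u (A.biUnion id) := by
    refine fun h ↦ hv ?_
    rcases mem_insert.1 h with rfl | h
    · exact self_mem_edgeBall F v k
    · exact edgeBall_mono F u (by omega) (edgeBall_subset_edgeBall hT u _ (hAball h))
  have hA := hF.card_lt_card_insert (hAT.trans hT) (by omega) u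
  have hB := hF.card_lt_card_insert (sdiff_subset.trans hT : T \ A ⊆ F) (by omega) v
  have hcover : insert u (insert v (T.biUnion id)) =
      insert u (A.biUnion id) ∪ insert v ((T \ A).biUnion id) := by
    conv_lhs => rw [← union_sdiff_of_subset hAT, union_biUnion]
    rw [insert_union, union_insert]
  rw [hcover, card_union_of_disjoint (disjoint_insert_right.2 ⟨hvA, hdisj⟩)]
  omega

theorem IsSparse.insert_pair (hF : IsSparse k (-1) F) (hv : v ∉ edgeBall F u k) :
    IsSparse k (-1) (insert {u, v} F) := by
  intro T hT hne hTk
  by_cases huv : {u, v} ∈ T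
  · have hcard := card_erase_add_one huv
    have hcover : T.biUnion id = insert u (insert v ((T.erase {u, v}).biUnion id)) := by
      conv_lhs => rw [← insert_erase huv, biUnion_insert]
      rw [id, insert_union, singleton_union]
    have hle := hF.card_add_two_le hv (subset_insert_iff.1 hT) (by omega)
    rw [hcover]
    omega
  · exact hF T ((subset_insert_iff_of_notMem huv).1 hT) hne hTk

theorem edgeDegree_insert_pair_le (hD : ∀ w, edgeDegree E w ≤ D) (hu : edgeDegree E u < D)
    (hv : edgeDegree E v < D) (w : V) : edgeDegree (insert {u, v} E) w ≤ D := by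
  unfold edgeDegree at *
  rw [filter_insert]
  split_ifs with hw
  · refine (card_insert_le _ _).trans ?_
    rcases mem_insert.1 hw with rfl | hw
    · exact hu
    · rwa [mem_singleton.1 hw]
  · exact hD w

theorem card_mul_le_of_edgeDegree {r : ℕ} (hr : ∀ e ∈ F, #e ≤ r) (X : Finset V) (D : ℕ) :
    #X * D ≤ #F * r + #{v ∈ X | edgeDegree F v < D} * D := by
  have hsaturated : #{v ∈ X | ¬ edgeDegree F v < D} * D ≤ #F * r :=
    calc #{v ∈ X | ¬ edgeDegree F v < D} * D
        ≤ ∑ e ∈ F, #({v ∈ X | ¬ edgeDegree F v < D} ∩ e) :=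
          le_sum_card_inter fun v hv ↦ not_lt.1 (mem_filter.1 hv).2
      _ ≤ #F * r := sum_le_card_nsmul _ _ _ fun e he ↦
          (card_le_card inter_subset_right).trans (hr e he)
  rw [← card_filter_add_card_filter_not (s := X) (fun v ↦ edgeDegree F v < D)]
  linarith

theorem mem_edgeBall_of_maximal
    (hF : Maximal (fun F ↦ F ⊆ X.powersetCard 2 ∧ IsSparse k (-1) F ∧ ∀ w, edgeDegree F w ≤ D) F)
    (huX : u ∈ X) (hvX : v ∈ X) (hu : edgeDegree F u < D) (hv : edgeDegree F v < D) :
    v ∈ edgeBall F u (k + 1) := by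
  obtain ⟨hFX, hsparse, hD⟩ := hF.prop
  by_contra hfar
  have huv : u ≠ v := by
    rintro rfl
    exact hfar (self_mem_edgeBall F u _)
  have hpair : {u, v} ∈ X.powersetCard 2 := by
    simp [mem_powersetCard, insert_subset_iff, huX, hvX, card_pair huv]
  have hmem : {u, v} ∈ F := insert_eq_self.1 <| hF.eq_of_ge
    ⟨insert_subset hpair hFX,
      hsparse.insert_pair fun h ↦ hfar (edgeBall_subset_succ F u k h),
      edgeDegree_insert_pair_le hD hu hv⟩ (subset_insert _ F)
  have hadj : {u, v} ⊆ edgeBall F u 1 :=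
    subset_edgeBall_succ hmem (by simp [edgeBall])
  exact hfar (edgeBall_mono F u (by omega) (hadj (by simp)))

theorem exists_isSparse_card_mul_le (k D : ℕ) (X : Finset V) :
    ∃ F ⊆ X.powersetCard 2, IsSparse k (-1) F ∧
      #X * D ≤ #F * 2 + (1 + D * 2) ^ (k + 1) * D := by
  classical
  obtain ⟨F, hF⟩ : ∃ F, Maximal
      (fun F ↦ F ⊆ X.powersetCard 2 ∧ IsSparse k (-1) F ∧ ∀ w, edgeDegree F w ≤ D) F := by
    obtain ⟨F, hF⟩ := {F ∈ (X.powersetCard 2).powerset |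
      IsSparse k (-1) F ∧ ∀ w, edgeDegree F w ≤ D}.exists_maximal
        ⟨∅, by simp +contextual [IsSparse, edgeDegree, subset_empty]⟩
    exact ⟨F, by simpa only [mem_filter, mem_powerset] using hF⟩
  obtain ⟨hFX, hsparse, hD⟩ := hF.prop
  have hF2 : ∀ e ∈ F, #e ≤ 2 := fun e he ↦ (mem_powersetCard.1 (hFX he)).2.le
  have hdeficient : #{v ∈ X | edgeDegree F v < D} ≤ (1 + D * 2) ^ (k + 1) := by
    rcases {v ∈ X | edgeDegree F v < D}.eq_empty_or_nonempty with hempty | ⟨u, hu⟩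
    · simp [hempty]
    · rw [mem_filter] at hu
      refine (card_le_card fun v hv ↦ ?_).trans (card_edgeBall_le hF2 hD u (k + 1))
      rw [mem_filter] at hv
      exact mem_edgeBall_of_maximal hF hu.1 hv.1 hu.2 hv.2
  refine ⟨F, hFX, hsparse, (card_mul_le_of_edgeDegree hF2 X D).trans ?_⟩
  gcongr

end SparseGraph

section SmallComponents

variable {k : ℕ} {q : ℤ}

theorem IsComponentUnion.mem_of_mem_biUnion {v : V} {e : Finset V} (hS : IsComponentUnion E S)
    (hv : v ∈ S.biUnion id) (he : e ∈ E) (hve : v ∈ e) : e ∈ S := by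
  by_contra heS
  exact disjoint_left.1 hS.2 hv (mem_biUnion.2 ⟨e, mem_sdiff.2 ⟨he, heS⟩, hve⟩)

theorem mem_smallComponents {e : Finset V} :
    e ∈ smallComponents k E ↔ e ∈ E ∧ ∃ S, IsComponentUnion E S ∧ #S < k ∧ e ∈ S := by
  classical exact mem_filter

theorem smallComponents_subset (k : ℕ) (E : Finset (Finset V)) : smallComponents k E ⊆ E :=
  fun _ he ↦ (mem_smallComponents.1 he).1

theorem exists_isComponentUnion_of_mem_biUnion {v : V}
    (hv : v ∈ (smallComponents k E).biUnion id) :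
    ∃ S, IsComponentUnion E S ∧ #S < k ∧ v ∈ S.biUnion id := by
  obtain ⟨e, he, hve⟩ := mem_biUnion.1 hv
  obtain ⟨-, S, hS, hSk, heS⟩ := mem_smallComponents.1 he
  exact ⟨S, hS, hSk, mem_biUnion.2 ⟨e, heS, hve⟩⟩

theorem isComponentUnion_smallComponents (k : ℕ) (E : Finset (Finset V)) :
    IsComponentUnion E (smallComponents k E) := by
  refine ⟨smallComponents_subset k E, disjoint_left.2 fun v hv hv' ↦ ?_⟩
  obtain ⟨S, hS, hSk, hvS⟩ := exists_isComponentUnion_of_mem_biUnion hv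
  obtain ⟨e, he, hve⟩ := mem_biUnion.1 hv'
  obtain ⟨heE, hesmall⟩ := mem_sdiff.1 he
  exact hesmall (mem_smallComponents.2 ⟨heE, S, hS, hSk, hS.mem_of_mem_biUnion hvS heE hve⟩)

theorem edgeDegree_smallComponents_lt {v : V} (hv : v ∈ (smallComponents k E).biUnion id) :
    edgeDegree (smallComponents k E) v < k := by
  obtain ⟨S, hS, hSk, hvS⟩ := exists_isComponentUnion_of_mem_biUnion hv
  refine (card_le_card fun e he ↦ ?_).trans_lt hSk
  obtain ⟨he, hve⟩ := mem_filter.1 he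
  exact hS.mem_of_mem_biUnion hvS (smallComponents_subset k E he) hve

theorem card_smallComponents_mul_le {r : ℕ} (hr : ∀ e ∈ E, r ≤ #e) :
    #(smallComponents k E) * r ≤ #((smallComponents k E).biUnion id) * k :=
  calc #(smallComponents k E) * r
      ≤ ∑ e ∈ smallComponents k E, #((smallComponents k E).biUnion id ∩ e) :=
        card_nsmul_le_sum _ _ _ fun e he ↦ by
          have hsub : e ⊆ (smallComponents k E).biUnion id := subset_biUnion_of_mem id he
          rw [inter_eq_right.2 hsub]
          exact hr e (smallComponents_subset k E he)
    _ ≤ #((smallComponents k E).biUnion id) * k :=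
        sum_card_inter_le fun _ hv ↦ (edgeDegree_smallComponents_lt hv).le

/-- An edge meeting `T` adds at most one vertex to it, so a maximal deficient `T ⊇ S` is a union of
components. -/
theorem exists_isComponentUnion_of_card_lt (h2 : ∀ e ∈ E, #e ≤ 2)
    (hE : ∀ T ⊆ E, #T = k → (k : ℤ) - q ≤ #(T.biUnion id))
    (hSE : S ⊆ E) (hSk : #S ≤ k) (hS : (#(S.biUnion id) : ℤ) < #S - q) :
    ∃ T, IsComponentUnion E T ∧ #T < k ∧ S ⊆ T := by
  obtain ⟨T, hST, hT⟩ := exists_le_maximal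
    {T ∈ E.powerset | #T ≤ k ∧ (#(T.biUnion id) : ℤ) < #T - q}
    (mem_filter.2 ⟨mem_powerset.2 hSE, hSk, hS⟩)
  obtain ⟨hTE, hTk, hTdef⟩ := by simpa only [mem_filter, mem_powerset] using hT.prop
  have hTk' : #T < k := hTk.lt_of_ne fun h ↦ by
    have := hE T hTE h
    omega
  refine ⟨T, ⟨hTE, (disjoint_biUnion_right _ _ _).2 fun e he ↦ ?_⟩, hTk', hST⟩
  obtain ⟨heE, heT⟩ := mem_sdiff.1 he
  by_contra hmeet
  have hcover : #((insert e T).biUnion id) ≤ #(T.biUnion id) + 1 := by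
    have hinter : 0 < #(e ∩ T.biUnion id) :=
      card_pos.2 (not_disjoint_iff_nonempty_inter.1 fun h ↦ hmeet h.symm)
    have hunion := card_union_add_card_inter e (T.biUnion id)
    have he2 := h2 e heE
    rw [biUnion_insert, id]
    omega
  refine heT (insert_eq_self.1 (hT.eq_of_ge ?_ (subset_insert e T)))
  rw [mem_filter, mem_powerset, card_insert_of_notMem heT]
  exact ⟨insert_subset heE hTE, hTk', by push_cast; omega⟩

theorem isSparse_sdiff_smallComponents (h2 : ∀ e ∈ E, #e ≤ 2)
    (hE : ∀ T ⊆ E, #T = k → (k : ℤ) - q ≤ #(T.biUnion id)) :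
    IsSparse k q (E \ smallComponents k E) := by
  intro S hS ⟨e, he⟩ hSk
  by_contra! hdef
  obtain ⟨heE, hesmall⟩ := mem_sdiff.1 (hS he)
  obtain ⟨T, hT, hTk, hST⟩ :=
    exists_isComponentUnion_of_card_lt h2 hE (hS.trans sdiff_subset) hSk hdef
  exact hesmall (mem_smallComponents.2 ⟨heE, T, hT, hTk, hST he⟩)

theorem exists_isSparse_card_le (hq : -1 ≤ q) (h2 : ∀ e ∈ E, #e = 2)
    (hE : ∀ T ⊆ E, #T = k → (k : ℤ) - q ≤ #(T.biUnion id)) :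
    ∃ F : Finset (Finset V), (∀ e ∈ F, #e = 2) ∧ IsSparse k q F ∧
      #E * 2 ≤ #F * 2 + (1 + k * 2) ^ (k + 1) * k := by
  set E₁ := smallComponents k E
  obtain ⟨F, hFW, hFsparse, hFcard⟩ := exists_isSparse_card_mul_le k k (E₁.biUnion id)
  have hF2 : ∀ e ∈ F, #e = 2 := fun e he ↦ (mem_powersetCard.1 (hFW he)).2
  have hcover : Disjoint ((E \ E₁).biUnion id) (F.biUnion id) :=
    (isComponentUnion_smallComponents k E).2.symm.mono_right <|
      biUnion_subset.2 fun e he ↦ (mem_powersetCard.1 (hFW he)).1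
  have hdisj : Disjoint (E \ E₁) F :=
    disjoint_of_disjoint_biUnion_id (fun e he ↦ card_pos.1 (by rw [hF2 e he]; norm_num)) hcover
  refine ⟨E \ E₁ ∪ F, fun e he ↦ ?_, ?_, ?_⟩
  · exact (mem_union.1 he).elim (fun h ↦ h2 e (mem_sdiff.1 h).1) (hF2 e)
  · exact (isSparse_sdiff_smallComponents (fun e he ↦ (h2 e he).le) hE).union hFsparse
      (by norm_num) hq hcover
  · have hE₁card : #E₁ * 2 ≤ #(E₁.biUnion id) * k :=
      card_smallComponents_mul_le fun e he ↦ (h2 e he).ge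
    have hcard := card_sdiff_add_card_eq_card (smallComponents_subset k E)
    rw [card_union_of_disjoint hdisj]
    linarith

end SmallComponents

section Extremal

variable {n r k : ℕ}

theorem bddAbove_of_subset_range_card {α : Type*} [Finite α] {A : Set ℕ}
    (hA : A ⊆ Set.range (card : Finset α → ℕ)) : BddAbove A :=
  (Set.finite_range card).bddAbove.mono hA

theorem card_le_exH {q : ℤ} {F : Finset (Finset (Fin n))} (hr : ∀ e ∈ F, #e = r)
    (hF : HFree r k q F) : #F ≤ exH n r k q :=
  le_csSup (bddAbove_of_subset_range_card fun _ ⟨E, _, _, hE⟩ ↦ ⟨E, hE⟩) ⟨F, hr, hF, rfl⟩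

theorem exists_card_add_one_eq_fBES (n r : ℕ) (hk : k ≠ 0) (v : ℤ) :
    ∃ E : Finset (Finset (Fin n)), (∀ e ∈ E, #e = r) ∧
      (∀ T ⊆ E, #T = k → v + 1 ≤ #(T.biUnion id)) ∧ #E + 1 = fBES n r k v := by
  obtain ⟨E, hr, hE, hcard⟩ := Nat.sSup_mem (s := {m | ∃ E : Finset (Finset (Fin n)),
      (∀ e ∈ E, #e = r) ∧ (∀ T ⊆ E, #T = k → v + 1 ≤ #(T.biUnion id)) ∧ #E = m})
    ⟨0, ∅, by simp, by simp [subset_empty, hk.symm], rfl⟩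
    (bddAbove_of_subset_range_card fun _ ⟨E, _, _, hE⟩ ↦ ⟨E, hE⟩)
  exact ⟨E, hr, hE, congrArg (· + 1) hcard⟩

end Extremal

end

/-- For `q ≥ -1` and `k ≥ q+3` there is a constant `d = d(k,q)` such that for every
`n ≥ k-q-1` we have `f^{(2)}(n,k-q-1,k) - ex(n, H^{(2)}(k,q)) ≤ d`. -/
theorem statement4 (k : ℕ) (q : ℤ) (hq : -1 ≤ q) (hk : q + 3 ≤ (k : ℤ)) :
    ∃ d : ℤ, ∀ n : ℕ, (k : ℤ) - q - 1 ≤ (n : ℤ) →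
      (fBES n 2 k ((k : ℤ) - q - 1) : ℤ) - (exH n 2 k q : ℤ) ≤ d := by
  refine ⟨((1 + k * 2) ^ (k + 1) * k + 1 : ℕ), fun n _ ↦ ?_⟩
  obtain ⟨E, hE2, hE, hEcard⟩ :=
    exists_card_add_one_eq_fBES n 2 (k := k) (by omega) ((k : ℤ) - q - 1)
  obtain ⟨F, hF2, hFsparse, hle⟩ :=
    exists_isSparse_card_le hq hE2 (by simpa only [sub_add_cancel] using hE)
  have hFcard : F.card ≤ exH n 2 k q := card_le_exH hF2 (hFsparse.hFree (by omega))
  omega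
end

section
/- Let v and k be integers with 2 ≤ v ≤ k, and let C = (k−v+1)^{1/⌊k/(k−v+2)⌋} (a real number). Then there exists a constant D such that for every positive integer n, f^{(2)}(n,v,k) < C·n^{1+1/⌊k/(k−v+2)⌋} + (k−v+1)·n + D. -/
/-!
Put `s = k - v + 1` and `t = ⌊k / (s + 1)⌋`. If no `v` vertices span `k` edges, then the graph is
locally close to a tree: if `s` non-tree edges meet a vertex `u`, then they and
the breadth-first search tree paths from their ends to the root `x` form a connected subgraph with
`s` more edges than a spanning tree. When it has at most `k` edges, padding it with edges at `x`
gives `k` edges on at most `v` vertices. So below depth `t`, all but at most `s` neighbours of each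
vertex are its children, and the sizes of the layers around `x` grow by a factor `δ - s` per step,
where `δ` is the minimum degree. In the last step adjacent pairs are counted instead of children:
a vertex of layer `t` has at most `s` neighbours in layer `t - 1`. This gives `(δ - s) ^ t ≤ s * n`.
A graph with more than `d * n` edges has a connected subgraph of minimum degree greater than `d`,
to which this is applied with `d` about `(s * n) ^ (1 / t) + s`.
-/

open Finset SimpleGraph

section EdgeSparse

variable {V W : Type*}

/-- No set of at most `v` vertices of `G` spans `k` or more edges. -/
def EdgeSparse (G : SimpleGraph V) (v k : ℕ) : Prop :=
  ∀ (S : Finset V) (F : Finset (Sym2 V)), ↑F ⊆ G.edgeSet → F ⊆ S.sym2 → #S ≤ v → #F < k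

lemma EdgeSparse.of_isContained {G : SimpleGraph V} {H : SimpleGraph W} {v k : ℕ}
    (hG : EdgeSparse G v k) (hHG : H ⊑ G) : EdgeSparse H v k := by
  obtain ⟨f⟩ := hHG
  intro S F hFH hFS hS
  rw [← card_map f.toEmbedding.sym2Map]
  refine hG (S.map f.toEmbedding) _ ?_ ?_ (by rwa [card_map])
  · intro e he
    obtain ⟨e, heF, rfl⟩ := mem_map.1 (mem_coe.1 he)
    induction e with | _ a b =>
    exact f.toHom.map_adj (hFH heF)
  · rw [sym2_map]
    exact map_subset_map.2 hFS

/-- A vertex of large degree allows any small edge set to be padded to exactly `k` edges at the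
cost of at most one new vertex per new edge. -/
lemma EdgeSparse.add_card_lt_card_add {G : SimpleGraph V} {v k : ℕ} (hG : EdgeSparse G v k)
    {u : V} [Fintype (G.neighborSet u)] (hu : k ≤ G.degree u) {S : Finset V} {F : Finset (Sym2 V)}
    (huS : u ∈ S) (hFG : ↑F ⊆ G.edgeSet) (hFS : F ⊆ S.sym2) (hFk : #F ≤ k) :
    v + #F < #S + k := by
  classical
  set star := (G.neighborFinset u).map (Sym2.mkEmbedding u)
  have hk_star : k ≤ #(F ∪ star) := by
    grw [hu, ← card_neighborFinset_eq_degree, ← card_map (Sym2.mkEmbedding u)]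
    exact card_le_card subset_union_right
  obtain ⟨F', hFF', hF'star, hF'⟩ := exists_subsuperset_card_eq subset_union_left hFk hk_star
  obtain ⟨N, hN, hF'N⟩ := subset_map_iff.1 (sdiff_le_iff.2 hF'star)
  have hF'_mem {e : Sym2 V} (he : e ∈ F') : e ∈ F ∨ ∃ w ∈ N, s(u, w) = e := by
    by_cases heF : e ∈ F
    · exact .inl heF
    · exact .inr (mem_map.1 (hF'N ▸ mem_sdiff.2 ⟨he, heF⟩))
  have hcard : #N + #F = k := by
    rw [← card_map (Sym2.mkEmbedding u), ← hF'N, card_sdiff_add_card_eq_card hFF', hF']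
  by_contra! hle
  refine (hG (S ∪ N) F' ?_ ?_ (by grw [card_union_le]; lia)).ne hF'
  · intro e he
    obtain heF | ⟨w, hw, rfl⟩ := hF'_mem he
    · exact hFG heF
    · exact (G.mem_neighborFinset u w).1 (hN hw)
  · intro e he
    obtain heF | ⟨w, hw, rfl⟩ := hF'_mem he
    · exact sym2_mono subset_union_left (hFS heF)
    · simp [huS, hw]

end EdgeSparse

/-- A breadth-first search tree of `G` rooted at `x`, given by its parent map. The root is its own
parent, so that `s(u, parent u)` is an edge of the tree for every other vertex `u`. -/
structure BFSTree {V : Type*} (G : SimpleGraph V) (x : V) where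
  parent : V → V
  parent_root : parent x = x
  adj_parent : ∀ u ≠ x, G.Adj u (parent u)
  dist_parent_add_one : ∀ u ≠ x, G.dist x (parent u) + 1 = G.dist x u

lemma BFSTree.nonempty {V : Type*} {G : SimpleGraph V} (hG : G.Connected) (x : V) :
    Nonempty (BFSTree G x) := by
  have exists_parent (u : V) (hu : u ≠ x) : ∃ p, G.Adj u p ∧ G.dist x p + 1 = G.dist x u := by
    obtain ⟨q, hq⟩ := hG.exists_walk_length_eq_dist u x
    cases q with
    | nil => exact absurd rfl hu
    | @cons _ p _ hup q =>
      refine ⟨p, hup, ?_⟩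
      have hle := G.dist_le q
      have := hG.dist_triangle (u := u) (v := p) (w := x)
      rw [dist_eq_one_iff_adj.2 hup] at this
      rw [Walk.length_cons] at hq
      rw [dist_comm, dist_comm (u := x) (v := u)]
      lia
  classical
  choose parent hadj hdist using exists_parent
  exact ⟨{ parent := fun u ↦ if hu : u = x then x else parent u hu
           parent_root := by simp
           adj_parent := fun u hu ↦ by simpa [hu] using hadj u hu
           dist_parent_add_one := fun u hu ↦ by simpa [hu] using hdist u hu }⟩

namespace BFSTree

variable {V : Type*} {G : SimpleGraph V} {x : V} (T : BFSTree G x)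

include T in
lemma eq_root_of_dist_eq_zero {u : V} (hu : G.dist x u = 0) : u = x := by
  by_contra hne
  have := T.dist_parent_add_one u hne
  lia

lemma dist_parent (u : V) : G.dist x (T.parent u) = G.dist x u - 1 := by
  obtain rfl | hu := eq_or_ne u x
  · simp [T.parent_root]
  · have := T.dist_parent_add_one u hu
    lia

lemma dist_eq_dist_parent_add_one_of_adj {u : V} (hu : G.Adj u (T.parent u)) :
    G.dist x u = G.dist x (T.parent u) + 1 := by
  refine (T.dist_parent_add_one u ?_).symm
  rintro rfl
  exact hu.ne T.parent_root.symm

lemma dist_parent_iterate (u : V) (j : ℕ) :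
    G.dist x (T.parent^[j] u) = G.dist x u - j := by
  induction j with
  | zero => rfl
  | succ j ih => rw [Function.iterate_succ_apply', dist_parent, ih, Nat.sub_sub]

lemma injective_parentEdge : Function.Injective fun u ↦ s(u, T.parent u) := by
  intro u w huw
  obtain ⟨h, -⟩ | ⟨huw, hwu⟩ := Sym2.eq_iff.1 huw
  · exact h
  · have hu := T.dist_parent u
    have hw := T.dist_parent w
    rw [hwu] at hu
    rw [← huw] at hw
    rw [T.eq_root_of_dist_eq_zero (u := u) (by lia), T.eq_root_of_dist_eq_zero (u := w) (by lia)]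

section Hull

variable [DecidableEq V]

/-- The vertices of the tree paths from the vertices of `S` to the root. -/
noncomputable def hull (S : Finset V) : Finset V :=
  insert x (S.biUnion fun u ↦ (range (G.dist x u)).image fun j ↦ T.parent^[j] u)

lemma root_mem_hull (S : Finset V) : x ∈ T.hull S := mem_insert_self _ _

lemma subset_hull (S : Finset V) : S ⊆ T.hull S := by
  intro u hu
  obtain rfl | hux := eq_or_ne u x
  · exact T.root_mem_hull S
  · have hpos : 0 < G.dist x u := by
      have := T.dist_parent_add_one u hux
      lia
    exact mem_insert_of_mem <| mem_biUnion.2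
      ⟨u, hu, mem_image.2 ⟨0, mem_range.2 hpos, rfl⟩⟩

lemma parent_mem_hull {S : Finset V} {w : V} (hw : w ∈ T.hull S) : T.parent w ∈ T.hull S := by
  obtain rfl | hw := mem_insert.1 hw
  · rwa [T.parent_root]
  simp only [mem_biUnion, mem_image, mem_range] at hw
  obtain ⟨u, hu, j, hj, rfl⟩ := hw
  rw [← Function.iterate_succ_apply' T.parent]
  obtain hj | hj : j + 1 < G.dist x u ∨ j + 1 = G.dist x u := by lia
  · exact mem_insert_of_mem <| mem_biUnion.2
      ⟨u, hu, mem_image.2 ⟨j + 1, mem_range.2 hj, rfl⟩⟩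
  · have hdist : G.dist x (T.parent^[j + 1] u) = 0 := by rw [dist_parent_iterate, hj, Nat.sub_self]
    rw [T.eq_root_of_dist_eq_zero hdist]
    exact T.root_mem_hull S

lemma card_hull_le (S : Finset V) : #(T.hull S) ≤ ∑ u ∈ S, G.dist x u + 1 := by
  grw [hull, card_insert_le, card_biUnion_le]
  gcongr with u
  exact card_image_le.trans_eq (card_range _)

end Hull

/-- Together with the tree edges inside a parent-closed set `S`, the edges in `F` form a subgraph
whose edges outnumber those of a spanning tree of `S` by `#F`. -/
lemma add_card_le_of_nontree {v k : ℕ} (hG : EdgeSparse G v k) [Fintype (G.neighborSet x)]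
    (hx : k ≤ G.degree x) {S : Finset V} {F : Finset (Sym2 V)} (hxS : x ∈ S)
    (hS : ∀ u ∈ S, T.parent u ∈ S) (hFG : ↑F ⊆ G.edgeSet) (hFS : F ⊆ S.sym2)
    (hF : ∀ u, s(u, T.parent u) ∉ F) (hk : #S + #F ≤ k + 1) : v + #F ≤ k := by
  classical
  set treeEdges := (S.erase x).image fun u ↦ s(u, T.parent u) with htreeEdges
  have htree_card : #treeEdges + 1 = #S := by
    rw [card_image_of_injective _ T.injective_parentEdge, card_erase_add_one hxS]
  have htree_G : ↑treeEdges ⊆ G.edgeSet := by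
    simp_rw [Set.subset_def, mem_coe, htreeEdges, forall_mem_image]
    exact fun u hu ↦ T.adj_parent u (ne_of_mem_erase hu)
  have htree_S : treeEdges ⊆ S.sym2 := by
    simp_rw [subset_iff, htreeEdges, forall_mem_image, mk_mem_sym2_iff]
    exact fun u hu ↦ ⟨mem_of_mem_erase hu, hS u (mem_of_mem_erase hu)⟩
  have hdisj : Disjoint treeEdges F := by
    simp_rw [Finset.disjoint_left, htreeEdges, forall_mem_image]
    exact fun u _ ↦ hF u
  have hcard : #(treeEdges ∪ F) = #treeEdges + #F := card_union_of_disjoint hdisj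
  have hlt : v + #(treeEdges ∪ F) < #S + k := by
    refine hG.add_card_lt_card_add hx hxS ?_ (union_subset htree_S hFS) (by lia)
    rw [coe_union]
    exact Set.union_subset htree_G hFG
  lia

section Sparse

variable [Fintype (G.neighborSet x)] {v k s D : ℕ} {u : V}

lemma card_lt_of_nontree_neighbors (hG : EdgeSparse G v k) (hx : k ≤ G.degree x) (hs : k < v + s)
    (hk : G.dist x u + s * (D + 1) ≤ k) {N : Finset V} (hadj : ∀ w ∈ N, G.Adj u w)
    (hchild : ∀ w ∈ N, T.parent w ≠ u) (hparent : T.parent u ∉ N)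
    (hdist : ∀ w ∈ N, G.dist x w ≤ D) : #N < s := by
  classical
  by_contra! hsN
  obtain ⟨N', hN', rfl⟩ := exists_subset_card_eq hsN
  have hsum : ∑ w ∈ insert u N', G.dist x w ≤ G.dist x u + #N' * D := by
    rw [sum_insert fun hu ↦ (hadj u (hN' hu)).ne rfl]
    gcongr
    exact sum_le_card_nsmul _ _ _ fun w hw ↦ hdist w (hN' hw)
  have hadd : v + #(N'.map (Sym2.mkEmbedding u)) ≤ k := by
    refine T.add_card_le_of_nontree hG hx (T.root_mem_hull (insert u N'))
      (fun _ ↦ T.parent_mem_hull) ?_ ?_ ?_ ?_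
    · simp_rw [Set.subset_def, mem_coe, forall_mem_map]
      exact fun w hw ↦ hadj w (hN' hw)
    · simp_rw [subset_iff, forall_mem_map, Sym2.mkEmbedding_apply, mk_mem_sym2_iff]
      exact fun w hw ↦ ⟨T.subset_hull _ (mem_insert_self u N'),
        T.subset_hull _ (mem_insert_of_mem hw)⟩
    · intro a ha
      simp only [mem_map, Sym2.mkEmbedding_apply, Sym2.eq_iff] at ha
      obtain ⟨w, hw, ⟨rfl, rfl⟩ | ⟨hua, rfl⟩⟩ := ha
      · exact hparent (hN' hw)
      · exact hchild w (hN' hw) hua.symm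
    · grw [card_map, card_hull_le, hsum, ← hk]
      lia
  rw [card_map] at hadd
  lia

lemma card_nonchild_neighbors_le (hG : EdgeSparse G v k) (hx : k ≤ G.degree x) (hs : k < v + s)
    (hk : G.dist x u + s * (D + 1) ≤ k) {N : Finset V} (hadj : ∀ w ∈ N, G.Adj u w)
    (hchild : ∀ w ∈ N, T.parent w ≠ u) (hdist : ∀ w ∈ N, G.dist x w ≤ D) : #N ≤ s := by
  classical
  have hlt : #(N.erase (T.parent u)) < s :=
    T.card_lt_of_nontree_neighbors hG hx hs hk (fun w hw ↦ hadj w (mem_of_mem_erase hw))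
      (fun w hw ↦ hchild w (mem_of_mem_erase hw)) (notMem_erase _ _)
      (fun w hw ↦ hdist w (mem_of_mem_erase hw))
  have := pred_card_le_card_erase (s := N) (a := T.parent u)
  lia

end Sparse

end BFSTree

section Layers

variable {V : Type*} [Fintype V] {G : SimpleGraph V} {v k s : ℕ}

/-- The set of vertices of `G` at distance `i` from `x`. -/
noncomputable def distLayer (G : SimpleGraph V) (x : V) (i : ℕ) : Finset V :=
  {u | G.dist x u = i}

@[simp]
lemma mem_distLayer {x u : V} {i : ℕ} : u ∈ distLayer G x i ↔ G.dist x u = i := by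
  simp [distLayer]

variable [DecidableRel G.Adj]

/-- Each vertex of layer `i` has many children in layer `i + 1`, and these are distinct for
distinct vertices. -/
lemma EdgeSparse.card_distLayer_mul_le (hG : EdgeSparse G v k) (hconn : G.Connected)
    (hs : k < v + s) (hδ : k ≤ G.minDegree) (x : V) {i : ℕ} (hi : i + s * (i + 2) ≤ k) :
    #(distLayer G x i) * (G.minDegree - s) ≤ #(distLayer G x (i + 1)) := by
  classical
  obtain ⟨T⟩ := BFSTree.nonempty hconn x
  have dist_le {u w : V} (hu : G.dist x u = i) (huw : G.Adj u w) : G.dist x w ≤ i + 1 := by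
    have := huw.diff_dist_adj (u := x)
    lia
  suffices #(distLayer G x i) * (G.minDegree - s) ≤ #(distLayer G x (i + 1)) * 1 by
    rwa [mul_one] at this
  refine card_mul_le_card_mul (fun u w ↦ G.Adj u w ∧ T.parent w = u) ?_ ?_
  · intro u hu
    rw [mem_distLayer] at hu
    have hnonchild : #{w ∈ G.neighborFinset u | T.parent w ≠ u} ≤ s := by
      refine T.card_nonchild_neighbors_le hG (hδ.trans (G.minDegree_le_degree x)) hs
        (u := u) (D := i + 1) (by rwa [hu]) ?_ ?_ ?_ <;>
        simp only [mem_filter, mem_neighborFinset]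
      · exact fun w hw ↦ hw.1
      · exact fun w hw ↦ hw.2
      · exact fun w hw ↦ dist_le hu hw.1
    have hchild : {w ∈ G.neighborFinset u | T.parent w = u} ⊆
        (distLayer G x (i + 1)).bipartiteAbove (fun u w ↦ G.Adj u w ∧ T.parent w = u) u := by
      intro w hw
      rw [mem_filter, mem_neighborFinset] at hw
      rw [mem_bipartiteAbove, mem_distLayer]
      obtain ⟨huw, rfl⟩ := hw
      exact ⟨hu ▸ T.dist_eq_dist_parent_add_one_of_adj huw.symm, huw, rfl⟩
    grw [← card_le_card hchild, G.minDegree_le_degree u, ← card_neighborFinset_eq_degree,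
      ← card_filter_add_card_filter_not (fun w ↦ T.parent w = u), hnonchild]
    lia
  · intro w _
    rw [card_le_one]
    simp only [mem_bipartiteBelow]
    exact fun a ha b hb ↦ ha.2.2.symm.trans hb.2.2

lemma EdgeSparse.card_distLayer_mul_le_mul (hG : EdgeSparse G v k) (hconn : G.Connected)
    (hs : k < v + s) (hδ : k ≤ G.minDegree) (x : V) {i : ℕ} (hi : (s + 1) * (i + 1) ≤ k) :
    #(distLayer G x i) * (G.minDegree - s) ≤ #(distLayer G x (i + 1)) * s := by
  classical
  obtain ⟨T⟩ := BFSTree.nonempty hconn x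
  have card_le {u : V} (hu : i ≤ G.dist x u) (hu' : G.dist x u ≤ i + 1) {N : Finset V}
      (hadj : ∀ w ∈ N, G.Adj u w) (hdist : ∀ w ∈ N, G.dist x w ≤ i) : #N ≤ s := by
    refine T.card_nonchild_neighbors_le hG (hδ.trans (G.minDegree_le_degree x)) hs
        (D := i) (by lia) hadj ?_ hdist
    rintro w hw rfl
    have := T.dist_eq_dist_parent_add_one_of_adj (hadj w hw).symm
    have := hdist w hw
    lia
  refine card_mul_le_card_mul G.Adj ?_ ?_
  · intro u hu
    rw [mem_distLayer] at hu
    have hnear : #{w ∈ G.neighborFinset u | G.dist x w ≤ i} ≤ s :=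
      card_le hu.ge (by lia) (by simp +contextual) (by simp +contextual)
    have hfar : {w ∈ G.neighborFinset u | ¬ G.dist x w ≤ i} ⊆
        (distLayer G x (i + 1)).bipartiteAbove G.Adj u := by
      intro w hw
      rw [mem_filter, mem_neighborFinset] at hw
      have := hw.1.diff_dist_adj (u := x)
      rw [mem_bipartiteAbove, mem_distLayer]
      exact ⟨by lia, hw.1⟩
    grw [← card_le_card hfar, G.minDegree_le_degree u, ← card_neighborFinset_eq_degree,
      ← card_filter_add_card_filter_not (fun w ↦ G.dist x w ≤ i), hnear]
    lia
  · intro w hw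
    rw [mem_distLayer] at hw
    refine card_le (u := w) (by lia) hw.le ?_ ?_ <;>
      simp only [mem_bipartiteBelow, mem_distLayer]
    · exact fun u hu ↦ hu.2.symm
    · exact fun u hu ↦ hu.1.le

lemma EdgeSparse.pow_le_card_distLayer (hG : EdgeSparse G v k) (hconn : G.Connected)
    (hs : k < v + s) (hδ : k ≤ G.minDegree) (x : V) {i : ℕ} (hi : (s + 1) * (i + 1) ≤ k) :
    (G.minDegree - s) ^ i ≤ #(distLayer G x i) := by
  induction i with
  | zero => exact card_pos.2 ⟨x, by simp⟩
  | succ i ih =>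
    grw [pow_succ, ih (by lia)]
    exact hG.card_distLayer_mul_le hconn hs hδ x (by lia)

theorem EdgeSparse.minDegree_sub_pow_le (hG : EdgeSparse G v k) (hconn : G.Connected)
    (hs : k < v + s) (hδ : k ≤ G.minDegree) {t : ℕ} (ht : t ≠ 0) (hk : (s + 1) * t ≤ k) :
    (G.minDegree - s) ^ t ≤ s * Fintype.card V := by
  obtain ⟨x⟩ := hconn.nonempty
  obtain ⟨i, rfl⟩ := Nat.exists_eq_succ_of_ne_zero ht
  calc (G.minDegree - s) ^ (i + 1)
      ≤ #(distLayer G x i) * (G.minDegree - s) := by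
        rw [pow_succ]
        gcongr
        exact hG.pow_le_card_distLayer hconn hs hδ x hk
    _ ≤ #(distLayer G x (i + 1)) * s := hG.card_distLayer_mul_le_mul hconn hs hδ x hk
    _ ≤ s * Fintype.card V := by
        rw [mul_comm]
        gcongr
        exact card_le_univ _

end Layers

lemma exists_connected_induce_minDegree_le {V : Type*} [Fintype V] [Nonempty V]
    (G : SimpleGraph V) [DecidableRel G.Adj] :
    ∃ (S : Set V) (_ : Fintype S) (_ : DecidableRel (G.induce S).Adj),
      (G.induce S).Connected ∧ G.minDegree ≤ (G.induce S).minDegree := by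
  classical
  obtain ⟨x⟩ := ‹Nonempty V›
  set C := G.connectedComponentMk x
  have hC : (G.induce C.supp).Connected := C.connected_toSimpleGraph
  have := hC.nonempty
  refine ⟨C.supp, inferInstance, inferInstance, hC, le_minDegree_of_forall_le_degree _ _ fun w ↦ ?_⟩
  rw [degree_induce_of_neighborSet_subset (s := C.supp)]
  · exact G.minDegree_le_degree w
  · exact fun b hb ↦ C.mem_supp_of_adj_mem_supp w.2 hb

universe u in
lemma exists_isContained_lt_minDegree {V : Type u} [Fintype V] (G : SimpleGraph V)
    [DecidableRel G.Adj] {d : ℕ} (hd : d * Fintype.card V < #G.edgeFinset) :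
    ∃ (W : Type u) (_ : Fintype W) (H : SimpleGraph W) (_ : DecidableRel H.Adj),
      H ⊑ G ∧ d < H.minDegree := by
  classical
  induction hn : Fintype.card V generalizing V with
  | zero =>
    have := Fintype.card_eq_zero_iff.1 hn
    simp [Subsingleton.elim G ⊥] at hd
  | succ n ih =>
    obtain hdeg | hdeg := lt_or_ge d G.minDegree
    · exact ⟨V, inferInstance, G, inferInstance, .rfl, hdeg⟩
    have : Nonempty V := Fintype.card_pos_iff.1 (by lia)
    obtain ⟨x, hx⟩ := G.exists_minimal_degree_vertex
    have hcard : Fintype.card ({x}ᶜ : Set V) = n := by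
      rw [Fintype.card_compl_set, hn, Set.card_singleton, Nat.add_sub_cancel]
    have hd' : d * Fintype.card ({x}ᶜ : Set V) < #(G.induce {x}ᶜ).edgeFinset := by
      rw [card_edgeFinset_induce_compl_singleton, card_edgeFinset_deleteIncidenceSet, hcard]
      rw [hn, mul_add_one] at hd
      lia
    obtain ⟨W, _, H, _, hHG, hH⟩ := ih _ hd' hcard
    exact ⟨W, _, H, _, hHG.trans ⟨(Embedding.induce _).toCopy⟩, hH⟩

universe u in
lemma exists_connected_isContained_lt_minDegree {V : Type u} [Fintype V] (G : SimpleGraph V)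
    [DecidableRel G.Adj] {d : ℕ} (hd : d * Fintype.card V < #G.edgeFinset) :
    ∃ (W : Type u) (_ : Fintype W) (H : SimpleGraph W) (_ : DecidableRel H.Adj),
      H ⊑ G ∧ H.Connected ∧ d < H.minDegree := by
  obtain ⟨W, _, H, _, hHG, hdH⟩ := exists_isContained_lt_minDegree G hd
  have : Nonempty W := by
    by_contra! hW
    simp at hdH
  obtain ⟨S, _, _, hconn, hS⟩ := exists_connected_induce_minDegree_le H
  exact ⟨S, _, H.induce S, _, .trans ⟨(Embedding.induce S).toCopy⟩ hHG, hconn, hdH.trans_le hS⟩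

theorem EdgeSparse.card_edgeFinset_le_mul_card {V : Type*} [Fintype V] {G : SimpleGraph V}
    [DecidableRel G.Adj] {v k s t d : ℕ} (hG : EdgeSparse G v k) (hs : k < v + s) (ht : t ≠ 0)
    (hk : (s + 1) * t ≤ k) (hkd : k ≤ d + 1) (hd : s * Fintype.card V < (d + 1 - s) ^ t) :
    #G.edgeFinset ≤ d * Fintype.card V := by
  by_contra! hlt
  obtain ⟨W, _, H, _, ⟨f⟩, hconn, hdH⟩ := exists_connected_isContained_lt_minDegree G hlt
  refine hd.not_ge ?_
  calc (d + 1 - s) ^ t ≤ (H.minDegree - s) ^ t := by gcongr; lia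
    _ ≤ s * Fintype.card W :=
      (hG.of_isContained ⟨f⟩).minDegree_sub_pow_le hconn hs (by lia) ht hk
    _ ≤ s * Fintype.card V := by grw [Fintype.card_le_of_injective f f.injective]

theorem EdgeSparse.card_edgeFinset_le_rpow {V : Type*} [Fintype V] {G : SimpleGraph V}
    [DecidableRel G.Adj] {v k s t : ℕ} (hG : EdgeSparse G v k) (hs0 : s ≠ 0) (hs : k < v + s)
    (ht : t ≠ 0) (hk : (s + 1) * t ≤ k) :
    (#G.edgeFinset : ℝ) ≤ ((s : ℝ) * Fintype.card V) ^ (1 / t : ℝ) * Fintype.card V +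
      s * Fintype.card V + k ^ (t + 1) := by
  set n := Fintype.card V
  set r : ℝ := ((s : ℝ) * n) ^ (1 / t : ℝ) with hr
  have hr0 : 0 ≤ r := by positivity
  have hrt : r ^ t = s * n := by
    rw [hr, one_div, Real.rpow_inv_natCast_pow (by positivity) ht]
  have card_le {q : ℕ} (hrq : r < q + 1) (hkq : k ≤ q + s + 1) : #G.edgeFinset ≤ (q + s) * n := by
    refine hG.card_edgeFinset_le_mul_card hs ht hk hkq ?_
    have : (s * n : ℝ) < (q + 1) ^ t := hrt ▸ pow_lt_pow_left₀ hrq hr0 ht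
    rw [show q + s + 1 - s = q + 1 by lia]
    exact_mod_cast this
  obtain hkr | hrk := le_or_gt (k : ℝ) r
  · have hE : #G.edgeFinset ≤ (⌊r⌋₊ + s) * n :=
      card_le (Nat.lt_floor_add_one r) (by have := Nat.le_floor hkr; lia)
    calc (#G.edgeFinset : ℝ) ≤ (⌊r⌋₊ + s) * n := mod_cast hE
      _ ≤ (r + s) * n := by grw [Nat.floor_le hr0]
      _ ≤ r * n + s * n + k ^ (t + 1) := by
        rw [add_mul]
        exact le_add_of_nonneg_right (by positivity)
  · have hn : n ≤ k ^ t := by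
      suffices (n : ℝ) ≤ k ^ t from mod_cast this
      calc (n : ℝ) ≤ s * n := mod_cast Nat.le_mul_of_pos_left n (Nat.pos_of_ne_zero hs0)
        _ = r ^ t := hrt.symm
        _ ≤ k ^ t := by gcongr
    have hE : #G.edgeFinset ≤ (k + s) * n := card_le (by linarith) (by lia)
    calc (#G.edgeFinset : ℝ) ≤ (k + s) * n := mod_cast hE
      _ = k * n + s * n := by ring
      _ ≤ k * k ^ t + s * n := by gcongr; exact_mod_cast hn
      _ ≤ r * n + s * n + k ^ (t + 1) := by
        have : 0 ≤ r * n := by positivity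
        rw [pow_succ']
        linarith

lemma EdgeSparse.of_forall_card_eq {V : Type*} [DecidableEq V] {G : SimpleGraph V} {v k : ℕ}
    (hG : ∀ F : Finset (Sym2 V), ↑F ⊆ G.edgeSet → #F = k → v < #(F.biUnion Sym2.toFinset)) :
    EdgeSparse G v k := by
  intro S F hFG hFS hS
  by_contra! hkF
  obtain ⟨F', hF', hk⟩ := exists_subset_card_eq hkF
  have hcover : F'.biUnion Sym2.toFinset ⊆ S := biUnion_subset.2 fun e he a ha ↦
    mem_sym2_iff.1 (hFS (hF' he)) a (Sym2.mem_toFinset.1 ha)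
  have := hG F' (hFG.trans' (coe_subset.2 hF')) hk
  grw [hcover] at this
  lia

lemma sym2_toFinset_injective {V : Type*} [DecidableEq V] :
    Function.Injective (Sym2.toFinset : Sym2 V → Finset V) := fun a b hab ↦ by
  ext
  rw [← Sym2.mem_toFinset, hab, Sym2.mem_toFinset]

lemma exists_image_toFinset_edgeFinset_eq {V : Type*} [Fintype V] [DecidableEq V]
    {E : Finset (Finset V)} (hE : ∀ e ∈ E, #e = 2) :
    ∃ (G : SimpleGraph V) (_ : DecidableRel G.Adj), G.edgeFinset.image Sym2.toFinset = E := by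
  refine ⟨fromEdgeSet {e | e.toFinset ∈ E}, Classical.decRel _, ?_⟩
  ext e
  simp only [mem_image, mem_edgeFinset, edgeSet_fromEdgeSet]
  constructor
  · rintro ⟨e, he, rfl⟩
    exact he.1
  · intro he
    obtain ⟨a, b, hab, rfl⟩ := card_eq_two.1 (hE e he)
    exact ⟨s(a, b), ⟨by rwa [Set.mem_ofPred_eq, Sym2.toFinset_mk_eq], hab⟩, Sym2.toFinset_mk_eq⟩

theorem exists_edgeSparse_fBES_eq (n v : ℕ) {k : ℕ} (hk : k ≠ 0) :
    ∃ (G : SimpleGraph (Fin n)) (_ : DecidableRel G.Adj),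
      EdgeSparse G v k ∧ fBES n 2 k v = #G.edgeFinset + 1 := by
  obtain ⟨E, hE, hspan, hcard⟩ := Nat.sSup_mem (s := {m | ∃ E : Finset (Finset (Fin n)),
    (∀ e ∈ E, #e = 2) ∧ (∀ E' ⊆ E, #E' = k → (v : ℤ) + 1 ≤ #(E'.biUnion id)) ∧ #E = m})
    ⟨0, ∅, by simp, by simp [hk.symm], rfl⟩ ⟨Fintype.card (Finset (Fin n)), by
      rintro m ⟨E, -, -, rfl⟩
      exact card_le_univ E⟩
  obtain ⟨G, _, rfl⟩ := exists_image_toFinset_edgeFinset_eq hE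
  have hG : EdgeSparse G v k := .of_forall_card_eq fun F hFG hFk ↦ by
    have := hspan (F.image Sym2.toFinset)
      (image_subset_image fun e he ↦ mem_edgeFinset.2 (hFG he))
      (by rwa [card_image_of_injective _ sym2_toFinset_injective])
    rw [image_biUnion] at this
    exact_mod_cast this
  refine ⟨G, inferInstance, hG, ?_⟩
  rw [fBES, ← hcard, card_image_of_injective _ sym2_toFinset_injective]

/-- For `2 ≤ v ≤ k` and `C = (k-v+1)^{1/⌊k/(k-v+2)⌋}`, there is a constant `D` such
that for every positive integer `n`,
`f^{(2)}(n,v,k) < C·n^{1+1/⌊k/(k-v+2)⌋} + (k-v+1)·n + D`. -/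
theorem statement7 (v k : ℕ) (C : ℝ)
    (hv : 2 ≤ v) (hvk : v ≤ k)
    (hC : C = ((k - v + 1 : ℕ) : ℝ) ^ ((1 : ℝ) / ((k / (k - v + 2) : ℕ) : ℝ))) :
    ∃ D : ℝ, ∀ n : ℕ, 0 < n →
      (fBES n 2 k (v : ℤ) : ℝ) <
        C * (n : ℝ) ^ ((1 : ℝ) + 1 / ((k / (k - v + 2) : ℕ) : ℝ)) +
          ((k - v + 1 : ℕ) : ℝ) * (n : ℝ) + D := by
  set s := k - v + 1
  set t := k / (k - v + 2)
  have ht : t ≠ 0 := (Nat.div_pos (by lia) (by lia)).ne'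
  have hk : (s + 1) * t ≤ k := Nat.mul_div_le k (s + 1)
  refine ⟨k ^ (t + 1) + 2, fun n hn ↦ ?_⟩
  obtain ⟨G, _, hG, hfBES⟩ := exists_edgeSparse_fBES_eq n v (k := k) (by lia)
  have hE := hG.card_edgeFinset_le_rpow (s := s) (by lia) (by lia) ht hk
  have hCn : C * (n : ℝ) ^ (1 + 1 / (t : ℝ)) = ((s : ℝ) * n) ^ (1 / t : ℝ) * n := by
    rw [hC, Real.mul_rpow (by positivity) (by positivity), Real.rpow_add (mod_cast hn),
      Real.rpow_one]
    ring
  rw [Fintype.card_fin] at hE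
  rw [hCn, hfBES]
  push_cast
  linarith
end
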